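/- arXiv:1903.00229 — 2 statements merged into one kernel-verified Lean document; each statement's English description precedes it below -/
import Mathlib

section
/- Let f ∈ L_∞(𝕋) have a lacunary Fourier series (f ∈ Λ) and let α > 0. Then for every n ∈ ℕ, ω_α(f, 2^{-n})_{L_∞(𝕋)} ≍ Σ_{k=n}^∞ 2^{-αk}‖(η_{2^k}f)^{(α)}‖_{L_∞(𝕋)}, with implicit constants independent of f and n. -/
open scoped ENNReal
open MeasureTheory

/-- Lebesgue measure on the fundamental interval `[0,2π]` of the circle `𝕋`. -/
noncomputable def circleMeasure : Measure ℝ :=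
  volume.restrict (Set.Icc 0 (2 * Real.pi))

/-- `f` is `2π`-periodic. -/
def Periodic2PiOne (f : ℝ → ℂ) : Prop :=
  ∀ x : ℝ, f (x + 2 * Real.pi) = f x

/-- Forward difference `Δ_h f = f(·+h) − f(·)`. -/
def cDiffOne (h : ℝ) (f : ℝ → ℂ) : ℝ → ℂ :=
  fun x => f (x + h) - f x

/-- Modulus of smoothness `ω_r(f,δ)_p = sup_{|h|≤δ} ‖Δ_h^r f‖_{L_p(𝕋)}`. -/
noncomputable def modSmoothOne (r : ℕ) (p : ℝ≥0∞) (f : ℝ → ℂ) (δ : ℝ) : ℝ≥0∞ :=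
  ⨆ h : {h : ℝ // |h| ≤ δ}, eLpNorm ((cDiffOne h.1)^[r] f) p circleMeasure

/-- Trigonometric polynomials of degree at most `n` on `𝕋`. -/
def TrigPolyOne (n : ℝ) : Set (ℝ → ℂ) :=
  {T | ∃ (s : Finset ℤ) (c : ℤ → ℂ), (∀ k ∈ s, |(k : ℝ)| ≤ n) ∧
    ∀ x : ℝ, T x = ∑ k ∈ s, c k * Complex.exp (Complex.I * k * x)}

/-- Fourier coefficient `\hat f(m) = (2π)^{-1} ∫_𝕋 f(x) e^{-imx} dx`. -/
noncomputable def fourierCoeffOne (f : ℝ → ℂ) (m : ℤ) : ℂ :=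
  (1 / (2 * Real.pi) : ℝ) •
    ∫ x, f x * Complex.exp (-(Complex.I * m * x)) ∂circleMeasure

/-- `f` has lacunary Fourier series: `\hat f(m) = 0` unless `|m|` is a power of `2`. -/
def LacunaryFourier (f : ℝ → ℂ) : Prop :=
  ∀ m : ℤ, (∀ j : ℕ, m.natAbs ≠ 2 ^ j) → fourierCoeffOne f m = 0

/-- Generalized binomial coefficient `binom(α,ν) = α(α−1)⋯(α−ν+1)/ν!`. -/
noncomputable def gBinom (α : ℝ) : ℕ → ℝ
  | 0 => 1
  | n + 1 => gBinom α n * (α - n) / (n + 1)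

/-- Fractional difference `Δ_h^α f(x) = ∑_{ν=0}^∞ (−1)^ν binom(α,ν) f(x + (α−ν)h)`. -/
noncomputable def fracDiffOne (α : ℝ) (h : ℝ) (f : ℝ → ℂ) : ℝ → ℂ :=
  fun x => ∑' ν : ℕ, ((-1 : ℝ) ^ ν * gBinom α ν) • f (x + (α - ν) * h)

/-- Fractional modulus of smoothness `ω_α(f,δ)_p = sup_{|h|≤δ} ‖Δ_h^α f‖_{L_p(𝕋)}`. -/
noncomputable def fracModSmoothOne (α : ℝ) (p : ℝ≥0∞) (f : ℝ → ℂ) (δ : ℝ) : ℝ≥0∞ :=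
  ⨆ h : {h : ℝ // |h| ≤ δ}, eLpNorm (fracDiffOne α h.1 f) p circleMeasure

/-- The Weyl derivative of order `α` of the de la Vallée Poussin mean `η_N f`:
`(η_N f)^{(α)}(x) = ∑_{m≠0} (im)^α η(|m|/N) \hat f(m) e^{imx}`. -/
noncomputable def vdpWeylOne (η : ℝ → ℝ) (α : ℝ) (N : ℕ) (f : ℝ → ℂ) : ℝ → ℂ :=
  fun x => ∑' m : ℤ,
    (if m = 0 then 0 else (Complex.I * (m : ℂ)) ^ (α : ℂ)) *
      ((η (|(m : ℝ)| / N) : ℝ) : ℂ) * fourierCoeffOne f m * Complex.exp (Complex.I * m * x)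

lemma gBinom_eq_choose (α : ℝ) (n : ℕ) : gBinom α n = Ring.choose α n := by
  rw [Ring.choose_eq_smul]
  induction n with
  | zero => simp [gBinom]
  | succ n ih =>
    rw [gBinom, ih, descPochhammer_succ_right, Nat.factorial_succ]
    simp only [Polynomial.smeval_mul, Polynomial.smeval_sub, Polynomial.smeval_X,
      Polynomial.smeval_natCast, smul_eq_mul, pow_one, pow_zero, nsmul_eq_mul, mul_one]
    have h1 : (n.factorial : ℝ) ≠ 0 := by positivity
    have h2 : (n + 1 : ℝ) ≠ 0 := by positivity
    push_cast
    field_simp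

lemma summable_abs_gBinom {α : ℝ} (hα : 0 < α) : Summable fun n => |gBinom α n| := by
  obtain ⟨N, hN⟩ := exists_nat_ge α
  have hrec (n : ℕ) (hn : N ≤ n) :
      α * |gBinom α n| = n * |gBinom α n| - (n + 1 : ℕ) * |gBinom α (n + 1)| := by
    have hn' : α ≤ n := hN.trans (by exact_mod_cast hn)
    have h2 : (0 : ℝ) < n + 1 := by positivity
    rw [gBinom, abs_div, abs_mul, abs_of_pos h2, abs_of_nonpos (sub_nonpos.2 hn')]
    push_cast
    field_simp
    ring
  rw [← summable_nat_add_iff N]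
  refine summable_of_sum_range_le (c := N * |gBinom α N| / α) (fun _ => abs_nonneg _) fun n => ?_
  rw [le_div_iff₀ hα, Finset.sum_mul]
  have key : ∑ i ∈ Finset.range n, |gBinom α (i + N)| * α =
      N * |gBinom α N| - (n + N : ℕ) * |gBinom α (n + N)| := by
    induction n with
    | zero => simp
    | succ n ih =>
      rw [Finset.sum_range_succ, ih, mul_comm _ α, hrec (n + N) (by omega),
        show n + 1 + N = n + N + 1 by ring]
      ring
  rw [key]
  have : 0 ≤ ((n + N : ℕ) : ℝ) * |gBinom α (n + N)| := by positivity
  linarith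

lemma norm_tsum_gBinom_pow {α : ℝ} (hα : 0 < α) {z : ℂ} (hz : ‖z‖ ≤ 1) :
    ‖∑' n : ℕ, (gBinom α n : ℂ) * z ^ n‖ = ‖1 + z‖ ^ α := by
  have hopen : ∀ w ∈ Metric.ball (0 : ℂ) 1,
      ‖∑' n : ℕ, (gBinom α n : ℂ) * w ^ n‖ = ‖1 + w‖ ^ α := by
    intro w hw
    have h := (Complex.one_add_cpow_hasFPowerSeriesOnBall_zero (a := (α : ℂ))).hasSum
      (y := w) (by simpa [← ENNReal.ofReal_one, Metric.eball_ofReal] using hw)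
    have h2 : HasSum (fun n : ℕ => (gBinom α n : ℂ) * w ^ n) ((1 + w) ^ (α : ℂ)) := by
      convert! h using 2 with n
      · simp [binomialSeries, gBinom_eq_choose, Complex.ofReal_choose, mul_comm]
      · simp
    rw [h2.tsum_eq, Complex.norm_cpow_real]
  have hcont : ContinuousOn (fun w : ℂ => ‖∑' n : ℕ, (gBinom α n : ℂ) * w ^ n‖)
      (Metric.closedBall 0 1) := by
    refine (continuousOn_tsum (fun n => by fun_prop) (summable_abs_gBinom hα) ?_).norm
    intro n w hw
    rw [norm_mul, norm_pow, Complex.norm_real, Real.norm_eq_abs]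
    exact mul_le_of_le_one_right (abs_nonneg _) (pow_le_one₀ (norm_nonneg _) (by simpa using hw))
  have hcont2 : ContinuousOn (fun w : ℂ => ‖1 + w‖ ^ α) (Metric.closedBall 0 1) :=
    Continuous.continuousOn
      ((continuous_const.add continuous_id).norm.rpow_const fun _ => Or.inr hα.le)
  have hcl : closure (Metric.ball (0 : ℂ) 1) = Metric.closedBall 0 1 :=
    closure_ball 0 one_ne_zero
  exact Set.EqOn.of_subset_closure hopen hcont hcont2 Metric.ball_subset_closedBall hcl.ge
    (by simpa using hz)

/-- The Fourier multiplier of the fractional difference of step `h`. -/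
noncomputable def fracSymbol (α h : ℝ) (m : ℤ) : ℂ :=
  ∑' ν : ℕ, (((-1 : ℝ) ^ ν * gBinom α ν : ℝ) : ℂ) * Complex.exp (Complex.I * m * ((α - ν) * h))

lemma norm_fracSymbol {α : ℝ} (hα : 0 < α) (h : ℝ) (m : ℤ) :
    ‖fracSymbol α h m‖ = |2 * Real.sin (m * h / 2)| ^ α := by
  have hz : ‖-Complex.exp (-(m * h : ℝ) * Complex.I)‖ ≤ 1 := by
    rw [norm_neg, ← Complex.ofReal_neg, Complex.norm_exp_ofReal_mul_I]
  have e : fracSymbol α h m = Complex.exp ((m * α * h : ℝ) * Complex.I) *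
      ∑' n : ℕ, (gBinom α n : ℂ) * (-Complex.exp (-(m * h : ℝ) * Complex.I)) ^ n := by
    rw [fracSymbol, ← tsum_mul_left]
    congr 1 with n
    rw [neg_pow (Complex.exp _), ← Complex.exp_nat_mul]
    rw [show Complex.I * m * ((α - n) * h) = (m * α * h : ℝ) * Complex.I +
      n * (-(m * h : ℝ) * Complex.I) by push_cast; ring, Complex.exp_add]
    push_cast
    ring
  rw [e, norm_mul, Complex.norm_exp_ofReal_mul_I, one_mul, norm_tsum_gBinom_pow hα hz]
  congr 1
  have : (1 : ℂ) + -Complex.exp (-(m * h : ℝ) * Complex.I) =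
      Complex.exp ((-(m * h / 2) : ℝ) * Complex.I) *
        ((2 * Real.sin (m * h / 2) : ℝ) * Complex.I) := by
    rw [Complex.exp_mul_I, Complex.exp_mul_I]
    push_cast
    rw [show -((m : ℂ) * h) = -(2 * ((m : ℂ) * h / 2)) by ring]
    simp only [Complex.cos_neg, Complex.sin_neg, Complex.cos_two_mul, Complex.sin_two_mul]
    have := Complex.sin_sq_add_cos_sq ((m : ℂ) * h / 2)
    linear_combination (-2) * this + 2 * Complex.sin ((m : ℂ) * h / 2) ^ 2 * Complex.I_sq
  rw [this, norm_mul, Complex.norm_exp_ofReal_mul_I, norm_mul, Complex.norm_I, Complex.norm_real,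
    Real.norm_eq_abs]
  ring

instance : IsFiniteMeasure circleMeasure := by
  unfold circleMeasure; infer_instance

lemma norm_exp_I_mul_int (m : ℤ) (x : ℝ) : ‖Complex.exp (Complex.I * m * x)‖ = 1 := by
  rw [show Complex.I * m * x = (m * x : ℝ) * Complex.I by push_cast; ring,
    Complex.norm_exp_ofReal_mul_I]

lemma norm_exp_neg_I_mul_int (m : ℤ) (x : ℝ) :
    ‖Complex.exp (-(Complex.I * m * x))‖ = 1 := by
  rw [show -(Complex.I * m * x) = (-(m * x) : ℝ) * Complex.I by push_cast; ring,
    Complex.norm_exp_ofReal_mul_I]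

lemma integrable_mul_exp {g : ℝ → ℂ} (hg : Integrable g circleMeasure) (m : ℤ) :
    Integrable (fun x : ℝ => g x * Complex.exp (-(Complex.I * m * x))) circleMeasure := by
  refine hg.mul_bdd (c := 1) (by fun_prop) (.of_forall fun x => ?_)
  rw [norm_exp_neg_I_mul_int]

lemma fourierCoeffOne_exp (k m : ℤ) :
    fourierCoeffOne (fun x => Complex.exp (Complex.I * k * x)) m = if m = k then 1 else 0 := by
  have hpi : (0 : ℝ) < 2 * Real.pi := by positivity
  unfold fourierCoeffOne circleMeasure
  rw [integral_Icc_eq_integral_Ioc, ← intervalIntegral.integral_of_le hpi.le]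
  simp_rw [← Complex.exp_add]
  split_ifs with h
  · subst h
    simp only [add_neg_cancel, Complex.exp_zero, intervalIntegral.integral_const, sub_zero,
      Complex.real_smul]
    push_cast
    have : (Real.pi : ℂ) ≠ 0 := by exact_mod_cast Real.pi_ne_zero
    field_simp
  · have hc : Complex.I * ((k : ℂ) - m) ≠ 0 :=
      mul_ne_zero Complex.I_ne_zero (sub_ne_zero.2 fun e => h (by exact_mod_cast e.symm))
    have e : (fun x : ℝ => Complex.exp (Complex.I * k * x + -(Complex.I * m * x))) =
        fun x : ℝ => Complex.exp (Complex.I * ((k : ℂ) - m) * x) := by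
      ext x; ring_nf
    rw [e, integral_exp_mul_complex hc]
    have : Complex.exp (Complex.I * ((k : ℂ) - m) * ((2 * Real.pi : ℝ) : ℂ)) = 1 := by
      rw [Complex.exp_eq_one_iff]
      exact ⟨k - m, by push_cast; ring⟩
    rw [this]
    simp

/-- The trigonometric polynomial factor `1 + Re (u e^{iqx})` of a Riesz product. -/
noncomputable def rieszFactor (u : ℂ) (q : ℕ) (x : ℝ) : ℝ :=
  1 + (u * Complex.exp (Complex.I * q * x)).re

/-- The Riesz product `∏_{j<N} (1 + Re (u_j e^{i q 4^j x}))`. -/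
noncomputable def rieszProd (u : ℕ → ℂ) (q : ℕ) (N : ℕ) (x : ℝ) : ℝ :=
  ∏ j ∈ Finset.range N, rieszFactor (u j) (q * 4 ^ j) x

lemma rieszFactor_mem {u : ℂ} (hu : ‖u‖ ≤ 1) (q : ℕ) (x : ℝ) :
    0 ≤ rieszFactor u q x ∧ rieszFactor u q x ≤ 2 := by
  have h := Complex.abs_re_le_norm (u * Complex.exp (Complex.I * q * x))
  have h2 := norm_exp_I_mul_int q x
  rw [norm_mul] at h
  push_cast at h2
  rw [h2, mul_one] at h
  have := abs_le.1 (h.trans hu)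
  unfold rieszFactor
  constructor <;> linarith [this.1, this.2]

lemma continuous_rieszProd (u : ℕ → ℂ) (q N : ℕ) : Continuous (rieszProd u q N) := by
  unfold rieszProd rieszFactor
  fun_prop

lemma rieszProd_nonneg {u : ℕ → ℂ} (hu : ∀ j, ‖u j‖ ≤ 1) (q N : ℕ) (x : ℝ) :
    0 ≤ rieszProd u q N x :=
  Finset.prod_nonneg fun j _ => (rieszFactor_mem (hu j) _ x).1

lemma rieszProd_le {u : ℕ → ℂ} (hu : ∀ j, ‖u j‖ ≤ 1) (q N : ℕ) (x : ℝ) :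
    rieszProd u q N x ≤ 2 ^ N := by
  refine (Finset.prod_le_prod (fun j _ => (rieszFactor_mem (hu j) _ x).1)
    fun j _ => (rieszFactor_mem (hu j) _ x).2).trans (by simp)

lemma integrable_mul_rieszProd {u : ℕ → ℂ} (hu : ∀ j, ‖u j‖ ≤ 1) (q N : ℕ) {g : ℝ → ℂ}
    (hg : Integrable g circleMeasure) :
    Integrable (fun x => g x * (rieszProd u q N x : ℂ)) circleMeasure := by
  refine hg.mul_bdd (c := 2 ^ N)
    (Complex.continuous_ofReal.comp (continuous_rieszProd u q N)).aestronglyMeasurable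
    (.of_forall fun x => ?_)
  rw [Complex.norm_real, Real.norm_eq_abs, abs_of_nonneg (rieszProd_nonneg hu q N x)]
  exact rieszProd_le hu q N x

lemma fourierCoeffOne_mul_rieszFactor {g : ℝ → ℂ} (hg : Integrable g circleMeasure) (u : ℂ)
    (q : ℕ) (m : ℤ) :
    fourierCoeffOne (fun x => g x * (rieszFactor u q x : ℂ)) m =
      fourierCoeffOne g m + u / 2 * fourierCoeffOne g (m - q) +
        star u / 2 * fourierCoeffOne g (m + q) := by
  have e (x : ℝ) : g x * (rieszFactor u q x : ℂ) * Complex.exp (-(Complex.I * m * x)) =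
      g x * Complex.exp (-(Complex.I * m * x)) +
        u / 2 * (g x * Complex.exp (-(Complex.I * (m - q : ℤ) * x))) +
        star u / 2 * (g x * Complex.exp (-(Complex.I * (m + q : ℤ) * x))) := by
    have h1 : (rieszFactor u q x : ℂ) = 1 + (u * Complex.exp (Complex.I * q * x) +
        star u * Complex.exp (-(Complex.I * q * x))) / 2 := by
      rw [rieszFactor]
      push_cast
      rw [Complex.re_eq_add_conj, map_mul, ← Complex.exp_conj]
      simp
    rw [h1, show -(Complex.I * (m - q : ℤ) * x) = -(Complex.I * m * x) + Complex.I * q * x by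
        push_cast; ring,
      show -(Complex.I * (m + q : ℤ) * x) = -(Complex.I * m * x) + -(Complex.I * q * x) by
        push_cast; ring, Complex.exp_add, Complex.exp_add]
    ring
  unfold fourierCoeffOne
  simp_rw [e]
  have i1 := integrable_mul_exp hg m
  have i2 := (integrable_mul_exp hg (m - q)).const_mul (u / 2)
  have i3 := (integrable_mul_exp hg (m + q)).const_mul (star u / 2)
  have i12 := i1.add i2
  simp only [Pi.add_def] at i12
  rw [integral_add i12 i3, integral_add i1 i2, integral_const_mul, integral_const_mul]
  simp only [Complex.real_smul]
  ring

lemma fourierCoeffOne_mul_rieszProd_succ {g : ℝ → ℂ} (hg : Integrable g circleMeasure)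
    {u : ℕ → ℂ} (hu : ∀ j, ‖u j‖ ≤ 1) (q N : ℕ) (m : ℤ) :
    fourierCoeffOne (fun x => g x * (rieszProd u q (N + 1) x : ℂ)) m =
      fourierCoeffOne (fun x => g x * (rieszProd u q N x : ℂ)) m +
      u N / 2 * fourierCoeffOne (fun x => g x * (rieszProd u q N x : ℂ)) (m - q * 4 ^ N) +
        star (u N) / 2 *
          fourierCoeffOne (fun x => g x * (rieszProd u q N x : ℂ)) (m + q * 4 ^ N) := by
  have := fourierCoeffOne_mul_rieszFactor (integrable_mul_rieszProd hu q N hg) (u N) (q * 4 ^ N) m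
  push_cast at this
  rw [← this]
  congr 1 with x
  rw [rieszProd, Finset.prod_range_succ, ← rieszProd]
  push_cast
  ring

lemma fourierCoeffOne_mul_rieszProd_of_isolated {g : ℝ → ℂ} (hg : Integrable g circleMeasure)
    {u : ℕ → ℂ} (hu : ∀ j, ‖u j‖ ≤ 1) {q : ℕ} (hq : 0 < q) (N : ℕ) (m : ℤ)
    (hiso : ∀ k : ℤ, k ≠ m → 3 * |k - m| < q * 4 ^ N → fourierCoeffOne g k = 0) :
    fourierCoeffOne (fun x => g x * (rieszProd u q N x : ℂ)) m = fourierCoeffOne g m := by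
  induction N generalizing m with
  | zero => simp [rieszProd]
  | succ N ih =>
    have hpos : (0 : ℤ) < q * 4 ^ N := by positivity
    have hs : (q : ℤ) * 4 ^ (N + 1) = 4 * (q * 4 ^ N) := by ring
    rw [hs] at hiso
    generalize hQ : (q : ℤ) * 4 ^ N = Q at *
    rw [fourierCoeffOne_mul_rieszProd_succ hg hu, hQ, ih m, ih (m - Q), ih (m + Q),
      hiso (m - Q), hiso (m + Q)]
    · simp
    all_goals first
      | (intro k hk hk'; apply hiso <;> grind)
      | grind

lemma fourierCoeffOne_mul_rieszProd_zero {g : ℝ → ℂ} (hg : Integrable g circleMeasure)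
    (hlac : LacunaryFourier g) {u : ℕ → ℂ} (hu : ∀ j, ‖u j‖ ≤ 1) {i : ℕ} (N : ℕ) :
    fourierCoeffOne (fun x => g x * (rieszProd u (2 ^ i) N x : ℂ)) 0 =
      ∑ j ∈ Finset.range N, (u j / 2 * fourierCoeffOne g (-2 ^ (i + 2 * j)) +
        star (u j) / 2 * fourierCoeffOne g (2 ^ (i + 2 * j))) := by
  induction N with
  | zero =>
    simp only [rieszProd, Finset.range_zero, Finset.prod_empty, Complex.ofReal_one, mul_one,
      Finset.sum_empty]
    exact hlac 0 fun j => by simp; positivity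
  | succ N ih =>
    have hQ : ((2 ^ i : ℕ) : ℤ) * 4 ^ N = 2 ^ (i + 2 * N) := by
      push_cast; rw [pow_add, pow_mul]; norm_num
    have key (m : ℤ) (hm : |m| = 2 ^ (i + 2 * N)) :
        fourierCoeffOne (fun x => g x * (rieszProd u (2 ^ i) N x : ℂ)) m =
          fourierCoeffOne g m := by
      refine fourierCoeffOne_mul_rieszProd_of_isolated hg hu (by positivity) N m ?_
      intro k hk hk'
      rw [hQ] at hk'
      refine hlac k fun j hj => ?_
      have hj' : |k| = 2 ^ j := by rw [Int.abs_eq_natAbs, hj]; push_cast; rfl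
      generalize i + 2 * N = l at *
      rcases lt_trichotomy j l with h | h | h
      · obtain ⟨d, rfl⟩ := Nat.exists_eq_add_of_lt h
        have : (2 : ℤ) ^ (j + d + 1) ≥ 2 * 2 ^ j := by
          rw [pow_succ, pow_add]
          have : (1 : ℤ) ≤ 2 ^ d := one_le_pow₀ (by norm_num)
          have : (0 : ℤ) < 2 ^ j := by positivity
          nlinarith
        grind
      · subst h; grind
      · obtain ⟨d, rfl⟩ := Nat.exists_eq_add_of_lt h
        have : (2 : ℤ) ^ (l + d + 1) ≥ 2 * 2 ^ l := by
          rw [pow_succ, pow_add]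
          have : (1 : ℤ) ≤ 2 ^ d := one_le_pow₀ (by norm_num)
          have : (0 : ℤ) < 2 ^ l := by positivity
          nlinarith
        grind
    rw [fourierCoeffOne_mul_rieszProd_succ hg hu, ih, hQ, key, key, Finset.sum_range_succ]
    · simp [add_assoc]
    · simp
    · simp

lemma integral_rieszProd {u : ℕ → ℂ} (hu : ∀ j, ‖u j‖ ≤ 1) {q : ℕ} (hq : 0 < q) (N : ℕ) :
    ∫ x, rieszProd u q N x ∂circleMeasure = 2 * Real.pi := by
  have h1 (k : ℤ) := fourierCoeffOne_exp 0 k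
  simp only [Int.cast_zero, mul_zero, zero_mul, Complex.exp_zero] at h1
  have h := fourierCoeffOne_mul_rieszProd_of_isolated (g := fun _ => 1) (integrable_const _) hu hq
    N 0 fun k hk _ => by rw [h1, if_neg hk]
  rw [h1, if_pos rfl] at h
  simp only [fourierCoeffOne, one_mul, Int.cast_zero, mul_zero, zero_mul, neg_zero,
    Complex.exp_zero, mul_one, integral_complex_ofReal, Complex.real_smul] at h
  have h' : 1 / (2 * Real.pi) * ∫ x, rieszProd u q N x ∂circleMeasure = 1 := by exact_mod_cast h
  field_simp at h'
  linarith

lemma norm_fourierCoeffOne_mul_rieszProd_le {g : ℝ → ℂ} {M : ℝ}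
    (hM : ∀ᵐ x ∂circleMeasure, ‖g x‖ ≤ M) {u : ℕ → ℂ} (hu : ∀ j, ‖u j‖ ≤ 1) {q : ℕ} (hq : 0 < q)
    (N : ℕ) : ‖fourierCoeffOne (fun x => g x * (rieszProd u q N x : ℂ)) 0‖ ≤ M := by
  have hpi : (0 : ℝ) < 2 * Real.pi := by positivity
  have hP : Integrable (rieszProd u q N) circleMeasure :=
    (continuous_rieszProd u q N).integrableOn_Icc
  have h : ‖∫ x, g x * (rieszProd u q N x : ℂ) *
      Complex.exp (-(Complex.I * (0 : ℤ) * x)) ∂circleMeasure‖ ≤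
      ∫ x, M * rieszProd u q N x ∂circleMeasure := by
    refine norm_integral_le_of_norm_le (hP.const_mul M) ?_
    filter_upwards [hM] with x hx
    rw [norm_mul, norm_mul, norm_exp_neg_I_mul_int, mul_one, Complex.norm_real, Real.norm_eq_abs,
      abs_of_nonneg (rieszProd_nonneg hu q N x)]
    exact mul_le_mul_of_nonneg_right hx (rieszProd_nonneg hu q N x)
  rw [integral_const_mul, integral_rieszProd hu hq] at h
  unfold fourierCoeffOne
  rw [norm_smul, Real.norm_eq_abs, abs_of_pos (by positivity)]
  refine (mul_le_mul_of_nonneg_left h (by positivity)).trans_eq ?_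
  field_simp

lemma sum_norm_add_star_fourierCoeffOne_le {g : ℝ → ℂ} (hg : Integrable g circleMeasure) {M : ℝ}
    (hM : ∀ᵐ x ∂circleMeasure, ‖g x‖ ≤ M) (hlac : LacunaryFourier g) (i N : ℕ) :
    ∑ j ∈ Finset.range N, ‖fourierCoeffOne g (-2 ^ (i + 2 * j)) +
      star (fourierCoeffOne g (2 ^ (i + 2 * j)))‖ ≤ 2 * M := by
  set z : ℕ → ℂ := fun j => fourierCoeffOne g (-2 ^ (i + 2 * j)) +
      star (fourierCoeffOne g (2 ^ (i + 2 * j))) with hz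
  set u : ℕ → ℂ := fun j => star (z j) / ‖z j‖ with hu
  have hu1 (j : ℕ) : ‖u j‖ ≤ 1 := by
    simp only [hu, norm_div, norm_star, Complex.norm_real, norm_norm]
    exact div_self_le_one _
  have huz (j : ℕ) : u j * z j = ‖z j‖ := by
    by_cases h : z j = 0
    · simp [h]
    · have : (‖z j‖ : ℂ) ≠ 0 := by simpa using h
      simp only [hu]
      rw [div_mul_eq_mul_div, div_eq_iff this, mul_comm, Complex.star_def, Complex.mul_conj,
        Complex.normSq_eq_norm_sq]
      push_cast; ring
  have h := norm_fourierCoeffOne_mul_rieszProd_le hM hu1 (q := 2 ^ i) (by positivity) N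
  rw [fourierCoeffOne_mul_rieszProd_zero hg hlac hu1] at h
  have h2 := (Complex.re_le_norm _).trans h
  rw [Complex.re_sum] at h2
  clear_value u
  have e (j : ℕ) : (u j / 2 * fourierCoeffOne g (-2 ^ (i + 2 * j)) +
      star (u j) / 2 * fourierCoeffOne g (2 ^ (i + 2 * j))).re = ‖z j‖ / 2 := by
    have h3 := congrArg Complex.re (huz j)
    simp only [hz, mul_add, Complex.add_re, Complex.ofReal_re] at h3
    have h4 : (star (u j) * fourierCoeffOne g (2 ^ (i + 2 * j))).re =
        (u j * star (fourierCoeffOne g (2 ^ (i + 2 * j)))).re := by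
      simp [Complex.mul_re]
    rw [Complex.add_re, div_mul_eq_mul_div, div_mul_eq_mul_div, Complex.div_ofNat_re,
      Complex.div_ofNat_re, h4]
    simp only [hz]
    linarith
  simp_rw [e] at h2
  rw [← Finset.sum_div] at h2
  linarith

lemma fourierCoeffOne_const_mul (c : ℂ) (g : ℝ → ℂ) (m : ℤ) :
    fourierCoeffOne (fun x => c * g x) m = c * fourierCoeffOne g m := by
  unfold fourierCoeffOne
  simp_rw [mul_assoc]
  rw [integral_const_mul, mul_smul_comm]

lemma sum_norm_fourierCoeffOne_le {g : ℝ → ℂ} (hg : Integrable g circleMeasure) {M : ℝ}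
    (hM : ∀ᵐ x ∂circleMeasure, ‖g x‖ ≤ M) (hlac : LacunaryFourier g) (i N : ℕ) :
    ∑ j ∈ Finset.range N, (‖fourierCoeffOne g (2 ^ (i + 2 * j))‖ +
      ‖fourierCoeffOne g (-2 ^ (i + 2 * j))‖) ≤ 4 * M := by
  have h1 := sum_norm_add_star_fourierCoeffOne_le hg hM hlac i N
  have h2 := sum_norm_add_star_fourierCoeffOne_le (hg.const_mul Complex.I)
    (M := M) (by simpa using hM)
    (fun m hm => by rw [fourierCoeffOne_const_mul, hlac m hm, mul_zero]) i N
  have h3 : ∀ a b : ℂ, ‖a‖ + ‖b‖ ≤ ‖b + star a‖ + ‖Complex.I * b + star (Complex.I * a)‖ := by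
    intro a b
    have e : ‖Complex.I * b + star (Complex.I * a)‖ = ‖b - star a‖ := by
      rw [show Complex.I * b + star (Complex.I * a) = Complex.I * (b - star a) by
        simp; ring, norm_mul, Complex.norm_I, one_mul]
    rw [e]
    have e1 : 2 * ‖b‖ ≤ ‖b + star a‖ + ‖b - star a‖ := by
      have := norm_add_le (b + star a) (b - star a)
      rwa [show b + star a + (b - star a) = 2 * b by ring, norm_mul, Complex.norm_ofNat] at this
    have e2 : 2 * ‖a‖ ≤ ‖b + star a‖ + ‖b - star a‖ := by
      have := norm_sub_le (b + star a) (b - star a)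
      rwa [show b + star a - (b - star a) = 2 * star a by ring, norm_mul, norm_star,
        Complex.norm_ofNat] at this
    linarith
  simp_rw [fourierCoeffOne_const_mul] at h2
  calc _ ≤ _ := Finset.sum_le_sum fun j _ => h3 _ _
    _ ≤ 4 * M := by rw [Finset.sum_add_distrib]; linarith

lemma tsum_int_eq_of_lacunary {F : ℤ → ℝ≥0∞}
    (hF : ∀ m : ℤ, (∀ j : ℕ, m.natAbs ≠ 2 ^ j) → F m = 0) :
    ∑' m, F m = ∑' j : ℕ, (F (2 ^ j) + F (-2 ^ j)) := by
  have hinj : Function.Injective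
      (Sum.elim (fun j : ℕ => (2 : ℤ) ^ j) (fun j : ℕ => -(2 : ℤ) ^ j)) := by
    have h2 := Int.pow_right_injective (a := 2) (by norm_num)
    have hpos (j : ℕ) : (0 : ℤ) < 2 ^ j := by positivity
    rintro (a | a) (b | b) h <;> simp only [Sum.elim_inl, Sum.elim_inr] at h
    · rw [h2 h]
    · linarith [hpos a, hpos b]
    · linarith [hpos a, hpos b]
    · rw [h2 (neg_injective h)]
  rw [← hinj.tsum_eq, ENNReal.summable.tsum_sum ENNReal.summable, ENNReal.tsum_add]
  · simp
  · intro m hm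
    by_contra hm'
    refine hm (hF m fun j hj => hm' ?_)
    rcases Int.natAbs_eq m with h | h
    · exact ⟨.inl j, by rw [h, hj]; simp⟩
    · exact ⟨.inr j, by rw [h, hj]; simp⟩

/-- Sidon's inequality for lacunary Fourier series. -/
lemma tsum_enorm_fourierCoeffOne_le {g : ℝ → ℂ} (hg : AEStronglyMeasurable g circleMeasure)
    (hlac : LacunaryFourier g) :
    ∑' m, ‖fourierCoeffOne g m‖ₑ ≤ 8 * eLpNorm g ∞ circleMeasure := by
  by_cases hfin : eLpNorm g ∞ circleMeasure = ∞
  · simp [hfin]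
  set M := (eLpNorm g ∞ circleMeasure).toReal with hMdef
  have hofM : ENNReal.ofReal M = eLpNorm g ∞ circleMeasure := ENNReal.ofReal_toReal hfin
  have hM : ∀ᵐ x ∂circleMeasure, ‖g x‖ ≤ M := by
    have := ae_le_eLpNormEssSup (f := g) (μ := circleMeasure)
    filter_upwards [this] with x hx
    rw [← eLpNorm_exponent_top, ← hofM, ← ofReal_norm] at hx
    exact (ENNReal.ofReal_le_ofReal_iff ENNReal.toReal_nonneg).1 hx
  have hgint : Integrable g circleMeasure := .of_bound hg M hM
  have key (i : ℕ) : ∑' j : ℕ, (‖fourierCoeffOne g (2 ^ (i + 2 * j))‖ₑ +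
      ‖fourierCoeffOne g (-2 ^ (i + 2 * j))‖ₑ) ≤ 4 * eLpNorm g ∞ circleMeasure := by
    refine ENNReal.tsum_le_of_sum_range_le fun N => ?_
    have h := sum_norm_fourierCoeffOne_le hgint hM hlac i N
    rw [← hofM]
    simp_rw [← ofReal_norm]
    simp_rw [← ENNReal.ofReal_add (norm_nonneg _) (norm_nonneg _)]
    rw [← ENNReal.ofReal_sum_of_nonneg fun _ _ => by positivity]
    refine (ENNReal.ofReal_le_ofReal h).trans_eq ?_
    rw [ENNReal.ofReal_mul (by norm_num)]
    norm_num
  rw [tsum_int_eq_of_lacunary fun m hm => by simp [hlac m hm],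
    ← tsum_even_add_odd ENNReal.summable ENNReal.summable]
  have k0 := key 0
  have k1 := key 1
  simp only [zero_add] at k0
  simp only [add_comm 1] at k1
  calc _ ≤ _ := add_le_add k0 k1
    _ = _ := by rw [← add_mul]; norm_num

/-- The trigonometric series with coefficients `c`. -/
noncomputable def trigSeries (c : ℤ → ℂ) (x : ℝ) : ℂ :=
  ∑' m : ℤ, c m * Complex.exp (Complex.I * m * x)

lemma continuous_trigSeries {c : ℤ → ℂ} (hc : Summable fun m => ‖c m‖) :
    Continuous (trigSeries c) := by
  refine continuous_tsum (fun m => by fun_prop) hc fun m x => ?_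
  rw [norm_mul, norm_exp_I_mul_int, mul_one]

lemma enorm_trigSeries_le (c : ℤ → ℂ) (x : ℝ) : ‖trigSeries c x‖ₑ ≤ ∑' m, ‖c m‖ₑ := by
  refine enorm_tsum_le_tsum_enorm.trans_eq ?_
  congr 1 with m
  rw [enorm_mul, ← ofReal_norm (Complex.exp _), norm_exp_I_mul_int]
  simp

lemma eLpNorm_trigSeries_le (c : ℤ → ℂ) :
    eLpNorm (trigSeries c) ∞ circleMeasure ≤ ∑' m, ‖c m‖ₑ := by
  rw [eLpNorm_exponent_top]
  exact eLpNormEssSup_le_of_ae_enorm_bound (.of_forall (enorm_trigSeries_le c))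

lemma fourierCoeffOne_trigSeries {c : ℤ → ℂ} (hc : Summable fun m => ‖c m‖) (m : ℤ) :
    fourierCoeffOne (trigSeries c) m = c m := by
  have hgint (k : ℤ) : Integrable (fun x : ℝ => c k * Complex.exp (Complex.I * k * x) *
      Complex.exp (-(Complex.I * m * x))) circleMeasure :=
    integrable_mul_exp (Continuous.integrableOn_Icc (by fun_prop)) m
  have hnorm (k : ℤ) (x : ℝ) : ‖c k * Complex.exp (Complex.I * k * x) *
      Complex.exp (-(Complex.I * m * x))‖ = ‖c k‖ := by
    rw [norm_mul, norm_mul, norm_exp_neg_I_mul_int, norm_exp_I_mul_int, mul_one, mul_one]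
  have h := integral_tsum_of_summable_integral_norm hgint (by
    simp_rw [hnorm, integral_const, smul_eq_mul]
    exact hc.mul_left _)
  have h2 (k : ℤ) : (1 / (2 * Real.pi) : ℝ) • ∫ x : ℝ, c k * Complex.exp (Complex.I * k * x) *
      Complex.exp (-(Complex.I * m * x)) ∂circleMeasure = if m = k then c m else 0 := by
    have := fourierCoeffOne_const_mul (c k) (fun x => Complex.exp (Complex.I * k * x)) m
    rw [fourierCoeffOne_exp] at this
    rw [← fourierCoeffOne, this]
    split_ifs with hmk <;> simp [hmk]
  unfold fourierCoeffOne trigSeries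
  simp_rw [← tsum_mul_right]
  rw [← h, ← tsum_const_smul'']
  simp_rw [h2]
  exact tsum_ite_eq' m _

lemma tsum_enorm_le_eLpNorm_trigSeries {c : ℤ → ℂ} (hc : Summable fun m => ‖c m‖)
    (hlac : ∀ m : ℤ, (∀ j : ℕ, m.natAbs ≠ 2 ^ j) → c m = 0) :
    ∑' m, ‖c m‖ₑ ≤ 8 * eLpNorm (trigSeries c) ∞ circleMeasure := by
  have := tsum_enorm_fourierCoeffOne_le (continuous_trigSeries hc).aestronglyMeasurable
    (g := trigSeries c) (fun m hm => by rw [fourierCoeffOne_trigSeries hc, hlac m hm])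
  simpa only [fourierCoeffOne_trigSeries hc] using this

lemma ae_eq_zero_of_fourierCoeffOne_eq_zero {g : ℝ → ℂ} (hg : MemLp g 2 circleMeasure)
    (h0 : ∀ m, fourierCoeffOne g m = 0) : g =ᵐ[circleMeasure] 0 := by
  have hpi : (0 : ℝ) < 2 * Real.pi := by positivity
  have hrestr : circleMeasure = volume.restrict (Set.Ioc 0 (2 * Real.pi)) :=
    (Measure.restrict_congr_set Ioc_ae_eq_Icc).symm
  have h := tsum_sq_fourierCoeffOn hpi (hrestr ▸ hg)
  have h1 (m : ℤ) : fourierCoeffOn hpi g m = 0 := by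
    rw [← h0 m, fourierCoeffOn_eq_integral, fourierCoeffOne, hrestr,
      intervalIntegral.integral_of_le hpi.le, sub_zero]
    congr 2 with x
    rw [fourier_coe_apply, smul_eq_mul, mul_comm]
    congr 2
    have : (Real.pi : ℂ) ≠ 0 := by exact_mod_cast Real.pi_ne_zero
    push_cast
    field_simp
  simp only [h1, norm_zero, ne_eq, OfNat.ofNat_ne_zero, not_false_eq_true, zero_pow, tsum_zero,
    sub_zero, smul_eq_mul] at h
  rw [intervalIntegral.integral_of_le hpi.le, ← hrestr] at h
  have h3 : ∫ x, ‖g x‖ ^ 2 ∂circleMeasure = 0 := by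
    rcases mul_eq_zero.1 h.symm with h | h
    · exact absurd h (by positivity)
    · exact h
  rw [integral_eq_zero_iff_of_nonneg (fun x => by positivity) hg.integrable_norm_pow'] at h3
  filter_upwards [h3] with x hx
  simpa using hx

lemma ae_of_periodic {p : ℝ → Prop} (hp : ∀ x, p x ↔ p (x + 2 * Real.pi))
    (h : ∀ᵐ x ∂circleMeasure, p x) : ∀ᵐ x, p x := by
  have hper : Function.Periodic p (2 * Real.pi) := fun x => propext (hp x).symm
  rw [circleMeasure, ae_restrict_iff' measurableSet_Icc] at h
  have h2 : ∀ᵐ x : ℝ, ∀ k : ℤ, x + k • (2 * Real.pi) ∈ Set.Icc 0 (2 * Real.pi) →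
      p (x + k • (2 * Real.pi)) :=
    ae_all_iff.2 fun k => (measurePreserving_add_right volume _).quasiMeasurePreserving.ae h
  filter_upwards [h2] with x hx
  obtain ⟨k, hk, -⟩ := existsUnique_add_zsmul_mem_Ico (show 0 < 2 * Real.pi by positivity) x 0
  have := hx k (by rw [zero_add] at hk; exact ⟨hk.1, hk.2.le⟩)
  rwa [hper.zsmul k] at this

lemma periodic_trigSeries (c : ℤ → ℂ) : Periodic2PiOne (trigSeries c) := by
  intro x
  unfold trigSeries
  congr 1 with m
  congr 1
  rw [Complex.exp_eq_exp_iff_exists_int]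
  exact ⟨m, by push_cast; ring⟩

lemma summable_norm_fourierCoeffOne {f : ℝ → ℂ} (hf : AEStronglyMeasurable f circleMeasure)
    (hfin : eLpNorm f ∞ circleMeasure ≠ ∞) (hlac : LacunaryFourier f) :
    Summable fun m => ‖fourierCoeffOne f m‖ := by
  rw [← tsum_enorm_ne_top_iff_summable_norm]
  exact ne_top_of_le_ne_top (ENNReal.mul_ne_top (by simp) hfin)
    (tsum_enorm_fourierCoeffOne_le hf hlac)

lemma ae_eq_trigSeries {f : ℝ → ℂ} (hper : Periodic2PiOne f)
    (hf : AEStronglyMeasurable f circleMeasure) (hfin : eLpNorm f ∞ circleMeasure ≠ ∞)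
    (hlac : LacunaryFourier f) : ∀ᵐ x, f x = trigSeries (fourierCoeffOne f) x := by
  have hs := summable_norm_fourierCoeffOne hf hfin hlac
  have hfm : MemLp f ∞ circleMeasure := ⟨hf, hfin.lt_top⟩
  have hFm : MemLp (trigSeries (fourierCoeffOne f)) ∞ circleMeasure :=
    ⟨(continuous_trigSeries hs).aestronglyMeasurable, (eLpNorm_trigSeries_le _).trans_lt
      (tsum_enorm_ne_top_iff_summable_norm.2 hs).lt_top⟩
  have h0 : f - trigSeries (fourierCoeffOne f) =ᵐ[circleMeasure] 0 := by
    refine ae_eq_zero_of_fourierCoeffOne_eq_zero ((hfm.sub hFm).mono_exponent le_top) fun m => ?_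
    have e := fourierCoeffOne_trigSeries hs m
    rw [← sub_eq_zero, ← neg_sub, neg_eq_zero] at e
    rw [← e]
    simp only [fourierCoeffOne, Pi.sub_apply, sub_mul]
    rw [integral_sub (integrable_mul_exp (hfm.integrable le_top) m)
      (integrable_mul_exp (hFm.integrable le_top) m), smul_sub]
  refine ae_of_periodic (fun x => ?_) ?_
  · rw [hper, periodic_trigSeries]
  · filter_upwards [h0] with x hx using sub_eq_zero.1 hx

lemma fracDiffOne_trigSeries {α : ℝ} (hα : 0 < α) (h : ℝ) {c : ℤ → ℂ}
    (hc : Summable fun m => ‖c m‖) (x : ℝ) :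
    fracDiffOne α h (trigSeries c) x = trigSeries (fun m => fracSymbol α h m * c m) x := by
  have hsum : Summable (Function.uncurry fun (ν : ℕ) (m : ℤ) =>
      ((((-1 : ℝ) ^ ν * gBinom α ν : ℝ) : ℂ) * (c m *
        Complex.exp (Complex.I * m * (x + (α - ν) * h : ℝ))))) := by
    refine .of_norm ?_
    have := (summable_abs_gBinom hα).mul_of_nonneg hc (fun _ => abs_nonneg _)
      fun _ => norm_nonneg _
    refine this.congr fun ⟨ν, m⟩ => ?_
    simp only [Function.uncurry_apply_pair]
    rw [norm_mul, norm_mul, norm_exp_I_mul_int, mul_one, Complex.norm_real, norm_mul, norm_pow]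
    simp
  unfold fracDiffOne trigSeries
  simp_rw [Complex.real_smul, ← tsum_mul_left]
  rw [← hsum.tsum_comm]
  congr 1 with m
  rw [fracSymbol, ← tsum_mul_right, ← tsum_mul_right]
  congr 1 with ν
  rw [show Complex.I * m * ((x + (α - ν) * h : ℝ) : ℂ) =
    Complex.I * m * ((α - ν) * h) + Complex.I * m * x by push_cast; ring, Complex.exp_add]
  ring

lemma fracDiffOne_congr_ae {f g : ℝ → ℂ} (hfg : ∀ᵐ x, f x = g x) (α h : ℝ) :
    ∀ᵐ x, fracDiffOne α h f x = fracDiffOne α h g x := by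
  have : ∀ᵐ x, ∀ ν : ℕ, f (x + (α - ν) * h) = g (x + (α - ν) * h) :=
    ae_all_iff.2 fun ν => (measurePreserving_add_right volume _).quasiMeasurePreserving.ae hfg
  filter_upwards [this] with x hx
  unfold fracDiffOne
  simp_rw [hx]

lemma summable_norm_of_enorm_le {c a : ℤ → ℂ} (ha : Summable fun m => ‖a m‖) {K : ℝ≥0∞}
    (hK : K ≠ ∞) (h : ∀ m, ‖c m‖ₑ ≤ K * ‖a m‖ₑ) : Summable fun m => ‖c m‖ := by
  rw [← tsum_enorm_ne_top_iff_summable_norm] at ha ⊢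
  refine ne_top_of_le_ne_top (ENNReal.mul_ne_top hK ha) ?_
  rw [← ENNReal.tsum_mul_left]
  exact ENNReal.tsum_le_tsum h

/-- The modulus of the multiplier of the fractional difference of step `h`. -/
noncomputable def diffWeight (α h : ℝ) (m : ℤ) : ℝ≥0∞ :=
  ENNReal.ofReal (|2 * Real.sin (m * h / 2)| ^ α)

/-- The modulus of the multiplier `(im)^α` cut off to `|m| < 2^k`. -/
noncomputable def derivWeight (α : ℝ) (k : ℕ) (m : ℤ) : ℝ≥0∞ :=
  if m.natAbs < 2 ^ k then ENNReal.ofReal (|(m : ℝ)| ^ α) else 0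

/-- The weight `min(1, (|m| / 2^n)^α)`. -/
noncomputable def minWeight (α : ℝ) (n : ℕ) (m : ℤ) : ℝ≥0∞ :=
  ENNReal.ofReal (min 1 ((|(m : ℝ)| / 2 ^ n) ^ α))

lemma eLpNorm_fracDiffOne_bounds {α : ℝ} (hα : 0 < α) {f : ℝ → ℂ} (hper : Periodic2PiOne f)
    (hf : AEStronglyMeasurable f circleMeasure) (hfin : eLpNorm f ∞ circleMeasure ≠ ∞)
    (hlac : LacunaryFourier f) (h : ℝ) :
    eLpNorm (fracDiffOne α h f) ∞ circleMeasure ≤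
        ∑' m, diffWeight α h m * ‖fourierCoeffOne f m‖ₑ ∧
      ∑' m, diffWeight α h m * ‖fourierCoeffOne f m‖ₑ ≤
        8 * eLpNorm (fracDiffOne α h f) ∞ circleMeasure := by
  have hs := summable_norm_fourierCoeffOne hf hfin hlac
  have hae : fracDiffOne α h f =ᵐ[circleMeasure]
      trigSeries fun m => fracSymbol α h m * fourierCoeffOne f m := by
    refine ae_restrict_of_ae ?_
    filter_upwards [fracDiffOne_congr_ae (ae_eq_trigSeries hper hf hfin hlac) α h] with x hx
    rw [hx, fracDiffOne_trigSeries hα h hs]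
  have he (m : ℤ) : ‖fracSymbol α h m * fourierCoeffOne f m‖ₑ =
      diffWeight α h m * ‖fourierCoeffOne f m‖ₑ := by
    rw [enorm_mul, ← ofReal_norm (fracSymbol α h m), norm_fracSymbol hα, diffWeight]
  have hs' : Summable fun m => ‖fracSymbol α h m * fourierCoeffOne f m‖ := by
    refine summable_norm_of_enorm_le hs (K := ENNReal.ofReal (2 ^ α)) (by simp) fun m => ?_
    rw [he]
    refine mul_le_mul_left (ENNReal.ofReal_le_ofReal ?_) _
    refine Real.rpow_le_rpow (abs_nonneg _) ?_ hα.le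
    rw [abs_mul, abs_two]
    linarith [Real.abs_sin_le_one (m * h / 2)]
  rw [eLpNorm_congr_ae hae]
  simp_rw [← he]
  exact ⟨eLpNorm_trigSeries_le _, tsum_enorm_le_eLpNorm_trigSeries hs' fun m hm => by
    rw [hlac m hm, mul_zero]⟩

lemma abs_intCast_eq_two_pow {m : ℤ} {j : ℕ} (hj : m.natAbs = 2 ^ j) : |(m : ℝ)| = 2 ^ j := by
  rw [← Int.cast_abs, Int.abs_eq_natAbs, hj]; push_cast; rfl

lemma eLpNorm_vdpWeylOne_bounds {η : ℝ → ℝ} (hη_one : ∀ ξ : ℝ, ξ ≤ 1 / 2 → η ξ = 1)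
    (hη_zero : ∀ ξ : ℝ, 1 ≤ ξ → η ξ = 0) {α : ℝ} (hα : 0 < α) {f : ℝ → ℂ}
    (hf : AEStronglyMeasurable f circleMeasure) (hfin : eLpNorm f ∞ circleMeasure ≠ ∞)
    (hlac : LacunaryFourier f) (k : ℕ) :
    eLpNorm (vdpWeylOne η α (2 ^ k) f) ∞ circleMeasure ≤
        ∑' m, derivWeight α k m * ‖fourierCoeffOne f m‖ₑ ∧
      ∑' m, derivWeight α k m * ‖fourierCoeffOne f m‖ₑ ≤
        8 * eLpNorm (vdpWeylOne η α (2 ^ k) f) ∞ circleMeasure := by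
  have hs := summable_norm_fourierCoeffOne hf hfin hlac
  set d : ℤ → ℂ := fun m => (if m = 0 then 0 else (Complex.I * (m : ℂ)) ^ (α : ℂ)) *
      ((η (|(m : ℝ)| / (2 ^ k : ℕ)) : ℝ) : ℂ) * fourierCoeffOne f m with hd
  have hv : vdpWeylOne η α (2 ^ k) f = trigSeries d := rfl
  have hd0 (m : ℤ) (hm : ∀ j : ℕ, m.natAbs ≠ 2 ^ j) : d m = 0 := by
    rw [hd]; simp only [hlac m hm, mul_zero]
  have he (m : ℤ) : ‖d m‖ₑ = derivWeight α k m * ‖fourierCoeffOne f m‖ₑ := by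
    by_cases hm : ∀ j : ℕ, m.natAbs ≠ 2 ^ j
    · rw [hd0 m hm, hlac m hm]; simp
    push Not at hm
    obtain ⟨j, hj⟩ := hm
    have hm0 : m ≠ 0 := by rintro rfl; simp at hj; exact absurd hj.symm (by positivity)
    have habs := abs_intCast_eq_two_pow hj
    simp only [hd, if_neg hm0]
    rw [enorm_mul, enorm_mul]
    congr 1
    have h1 : ‖(Complex.I * (m : ℂ)) ^ (α : ℂ)‖ₑ = ENNReal.ofReal (|(m : ℝ)| ^ α) := by
      rw [← ofReal_norm, Complex.norm_cpow_real, norm_mul, Complex.norm_I, one_mul,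
        Complex.norm_intCast]
    rw [h1, derivWeight, hj, habs]
    push_cast
    split_ifs with hlt
    · rw [hη_one]
      · simp
      · have hjk : j + 1 ≤ k := (Nat.pow_lt_pow_iff_right (by norm_num)).1 hlt
        rw [div_le_iff₀ (by positivity)]
        have := pow_le_pow_right₀ (show (1 : ℝ) ≤ 2 by norm_num) hjk
        rw [pow_succ] at this
        linarith
    · rw [hη_zero]
      · simp
      · rw [le_div_iff₀ (by positivity), one_mul]
        exact_mod_cast not_lt.1 hlt
  have hs' : Summable fun m => ‖d m‖ := by
    refine summable_norm_of_enorm_le hs (K := ENNReal.ofReal ((2 ^ k) ^ α)) (by simp) fun m => ?_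
    rw [he]
    refine mul_le_mul_left ?_ _
    rw [derivWeight]
    split_ifs with hlt
    · refine ENNReal.ofReal_le_ofReal (Real.rpow_le_rpow (abs_nonneg _) ?_ hα.le)
      rw [← Int.cast_abs, Int.abs_eq_natAbs]
      exact_mod_cast hlt.le
    · simp
  rw [hv]
  simp_rw [← he]
  exact ⟨eLpNorm_trigSeries_le _, tsum_enorm_le_eLpNorm_trigSeries hs' hd0⟩

lemma two_rpow_neg_mul (α : ℝ) (k : ℕ) :
    (2 : ℝ≥0∞) ^ (-(k : ℝ) * α) = ENNReal.ofReal ((2 ^ (-α)) ^ k) := by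
  rw [← Real.rpow_natCast, ← Real.rpow_mul (by norm_num),
    ← ENNReal.ofReal_rpow_of_pos (by norm_num)]
  norm_num
  ring_nf

lemma minWeight_le_tsum {α : ℝ} (hα : 0 < α) (n : ℕ) {m : ℤ} {j : ℕ} (hj : m.natAbs = 2 ^ j) :
    minWeight α n m ≤ ENNReal.ofReal (2 ^ α) *
      ∑' k : ℕ, (2 : ℝ≥0∞) ^ (-((n + k : ℕ) : ℝ) * α) * derivWeight α (n + k) m := by
  rw [← ENNReal.tsum_mul_left]
  refine le_trans ?_ (ENNReal.le_tsum (j + 1 - n))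
  rw [two_rpow_neg_mul, derivWeight, abs_intCast_eq_two_pow hj, minWeight,
    abs_intCast_eq_two_pow hj, hj, if_pos (Nat.pow_lt_pow_right (by norm_num) (by omega)),
    ← ENNReal.ofReal_mul (by positivity), ← ENNReal.ofReal_mul (by positivity)]
  refine ENNReal.ofReal_le_ofReal ?_
  have h2 : (1 : ℝ) ≤ 2 ^ α := Real.one_le_rpow (by norm_num) hα.le
  rw [Real.rpow_neg (by norm_num), inv_pow, Real.div_rpow (by positivity) (by positivity),
    ← Real.rpow_pow_comm (by norm_num), ← Real.rpow_pow_comm (by norm_num)]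
  generalize (2 : ℝ) ^ α = b at *
  have hb : 0 < b := by linarith
  rcases le_total n (j + 1) with h | h
  · refine (min_le_left _ _).trans (le_of_eq ?_)
    rw [Nat.add_sub_cancel' h]
    field_simp
    ring
  · refine (min_le_right _ _).trans ?_
    rw [show n + (j + 1 - n) = n by omega, div_eq_mul_inv, mul_comm _ (b ^ j)]
    exact le_mul_of_one_le_left (by positivity) h2

lemma tsum_le_minWeight {α : ℝ} (hα : 0 < α) (n : ℕ) {m : ℤ} {j : ℕ} (hj : m.natAbs = 2 ^ j) :
    ∑' k : ℕ, (2 : ℝ≥0∞) ^ (-((n + k : ℕ) : ℝ) * α) * derivWeight α (n + k) m ≤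
      ENNReal.ofReal (1 - 2 ^ (-α))⁻¹ * minWeight α n m := by
  have hr0 : (0 : ℝ) < 2 ^ (-α) := by positivity
  have hr1 : (2 : ℝ) ^ (-α) < 1 := Real.rpow_lt_one_of_one_lt_of_neg (by norm_num) (by linarith)
  have hrb : ((2 : ℝ) ^ (-α)) * 2 ^ α = 1 := by
    rw [← Real.rpow_add (by norm_num)]; simp
  have hgeo : ENNReal.ofReal (1 - 2 ^ (-α))⁻¹ = ∑' k : ℕ, ENNReal.ofReal ((2 ^ (-α)) ^ k) := by
    rw [← tsum_geometric_of_lt_one hr0.le hr1, ENNReal.ofReal_tsum_of_nonneg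
      (fun _ => by positivity) (summable_geometric_of_lt_one hr0.le hr1)]
  simp_rw [two_rpow_neg_mul, derivWeight, minWeight, abs_intCast_eq_two_pow hj, hj,
    Real.div_rpow (pow_nonneg (zero_le_two (α := ℝ)) _) (pow_nonneg (zero_le_two (α := ℝ)) _),
    ← Real.rpow_pow_comm (zero_le_two (α := ℝ))]
  have hdiv : ((2 : ℝ) ^ α) ^ j / (2 ^ α) ^ n = (2 ^ (-α)) ^ n * (2 ^ α) ^ j := by
    rw [Real.rpow_neg (by norm_num), inv_pow]; field_simp
  have hcancel (l : ℕ) : ((2 : ℝ) ^ (-α)) ^ l * (2 ^ α) ^ l = 1 := by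
    rw [← mul_pow, hrb, one_pow]
  rw [hdiv]
  generalize (2 : ℝ) ^ (-α) = r at *
  generalize (2 : ℝ) ^ α = b at *
  have hb : 1 < b := by nlinarith
  rcases lt_or_ge j n with h | h
  · have hmin : min 1 (r ^ n * b ^ j) = r ^ n * b ^ j := by
      refine min_eq_right ?_
      rw [← hcancel j]
      exact mul_le_mul_of_nonneg_right (pow_le_pow_of_le_one hr0.le hr1.le h.le) (by positivity)
    rw [hmin, hgeo, ← ENNReal.tsum_mul_right]
    refine ENNReal.tsum_le_tsum fun k => ?_
    rw [if_pos (Nat.pow_lt_pow_right (by norm_num) (by omega)),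
      ← ENNReal.ofReal_mul (by positivity), ← ENNReal.ofReal_mul (by positivity)]
    exact ENNReal.ofReal_le_ofReal (by rw [pow_add]; exact le_of_eq (by ring))
  · have hmin : min 1 (r ^ n * b ^ j) = 1 := by
      refine min_eq_left ?_
      rw [← hcancel n]
      exact mul_le_mul_of_nonneg_left (pow_le_pow_right₀ hb.le h) (by positivity)
    rw [hmin, ENNReal.ofReal_one, mul_one, hgeo,
      ← Summable.sum_add_tsum_nat_add' (k := j - n) (f := fun k => ENNReal.ofReal (r ^ (n + k)) *
        if 2 ^ j < 2 ^ (n + k) then ENNReal.ofReal (b ^ j) else 0) ENNReal.summable]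
    rw [Finset.sum_eq_zero, zero_add]
    · refine ENNReal.tsum_le_tsum fun k => ?_
      split_ifs
      · rw [← ENNReal.ofReal_mul (by positivity), show n + (k + (j - n)) = k + j by omega, pow_add,
          mul_assoc, hcancel, mul_one]
      · simp
    · intro k hk
      rw [Finset.mem_range] at hk
      rw [if_neg, mul_zero]
      rw [Nat.pow_lt_pow_iff_right (by norm_num)]
      omega

lemma diffWeight_le_minWeight {α : ℝ} (hα : 0 < α) {n : ℕ} {h : ℝ} (hh : |h| ≤ 1 / 2 ^ n)
    (m : ℤ) : diffWeight α h m ≤ ENNReal.ofReal (2 ^ α) * minWeight α n m := by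
  rw [diffWeight, minWeight, ← ENNReal.ofReal_mul (by positivity)]
  refine ENNReal.ofReal_le_ofReal ?_
  rw [mul_min_of_nonneg _ _ (by positivity), mul_one]
  have h1 : |2 * Real.sin (m * h / 2)| ≤ 2 := by
    rw [abs_mul, abs_two]; linarith [Real.abs_sin_le_one (m * h / 2)]
  have h2 : |2 * Real.sin (m * h / 2)| ≤ |(m : ℝ)| / 2 ^ n := by
    have := Real.abs_sin_le_abs (x := m * h / 2)
    rw [abs_div, abs_two, abs_mul] at this
    rw [abs_mul, abs_two]
    have h3 := mul_le_mul_of_nonneg_left hh (abs_nonneg (m : ℝ))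
    rw [mul_one_div] at h3
    linarith
  refine le_min (Real.rpow_le_rpow (abs_nonneg _) h1 hα.le)
    ((Real.rpow_le_rpow (abs_nonneg _) h2 hα.le).trans ?_)
  exact le_mul_of_one_le_left (by positivity) (Real.one_le_rpow (by norm_num) hα.le)

lemma integral_sin_sq_sub_ge {a H : ℝ} (hH : 0 ≤ H) (ha : 2 ≤ a * H) :
    H / 8 ≤ ∫ h in 0..H, (Real.sin (a * h / 2) ^ 2 - 1 / 8) := by
  have ha0 : 0 < a := by
    by_contra hc
    nlinarith
  have e : (fun h : ℝ => Real.sin (a * h / 2) ^ 2 - 1 / 8) =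
      fun h => 3 / 8 - 1 / 2 * Real.cos (a * h) := by
    ext h
    rw [Real.sin_sq_eq_half_sub, show 2 * (a * h / 2) = a * h by ring]
    ring
  rw [e, intervalIntegral.integral_sub (by simp) (Continuous.intervalIntegrable (by fun_prop) _ _),
    intervalIntegral.integral_const, intervalIntegral.integral_const_mul,
    intervalIntegral.integral_comp_mul_left _ ha0.ne', integral_cos]
  simp only [sub_zero, smul_eq_mul, mul_zero, Real.sin_zero]
  have h1 : a⁻¹ * Real.sin (a * H) ≤ H / 2 := by
    rw [inv_mul_le_iff₀ ha0]
    linarith [Real.sin_le_one (a * H)]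
  linarith

lemma mul_sin_sq_sub_le_rpow {α : ℝ} (hα : 0 < α) (x : ℝ) :
    2 ^ (-α) * (Real.sin x ^ 2 - 1 / 8) ≤ |2 * Real.sin x| ^ α := by
  rcases lt_or_ge |2 * Real.sin x| (1 / 2) with h | h
  · have h1 : Real.sin x ^ 2 - 1 / 8 ≤ 0 := by
      have := abs_lt.1 h
      nlinarith
    exact (mul_nonpos_of_nonneg_of_nonpos (by positivity) h1).trans (by positivity)
  · have h1 : Real.sin x ^ 2 - 1 / 8 ≤ 1 := by linarith [Real.sin_sq_le_one x]
    calc _ ≤ (2 : ℝ) ^ (-α) * 1 := mul_le_mul_of_nonneg_left h1 (by positivity)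
      _ = (1 / 2) ^ α := by
        rw [mul_one, Real.rpow_neg (by norm_num), one_div, Real.inv_rpow (by norm_num)]
      _ ≤ _ := Real.rpow_le_rpow (by norm_num) h hα.le

lemma continuous_diffWeight {α : ℝ} (hα : 0 < α) (m : ℤ) :
    Continuous fun h => |2 * Real.sin (m * h / 2)| ^ α :=
  Continuous.rpow_const (by fun_prop) fun _ => Or.inr hα.le

lemma le_lintegral_diffWeight {α : ℝ} (hα : 0 < α) {n : ℕ} {m : ℤ}
    (hm : 2 ^ (n + 1) ≤ |(m : ℝ)|) :
    1 ≤ ENNReal.ofReal (2 ^ α * 8 * 2 ^ n) *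
      ∫⁻ h in Set.Ioc (0 : ℝ) (1 / 2 ^ n), diffWeight α h m := by
  set H : ℝ := 1 / 2 ^ n with hH
  have hH0 : 0 ≤ H := by positivity
  have habs : (fun h => diffWeight α h m) = fun h =>
      ENNReal.ofReal (|2 * Real.sin (|(m : ℝ)| * h / 2)| ^ α) := by
    ext h
    rw [diffWeight]
    rcases abs_choice (m : ℝ) with e | e <;> rw [e]
    rw [show -(m : ℝ) * h / 2 = -(m * h / 2) by ring, Real.sin_neg, mul_neg, abs_neg]
  have hcont : Continuous fun h => |2 * Real.sin (|(m : ℝ)| * h / 2)| ^ α :=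
    Continuous.rpow_const (by fun_prop) fun _ => Or.inr hα.le
  have hge := integral_sin_sq_sub_ge (a := |(m : ℝ)|) hH0 (by
    rw [hH, mul_one_div, le_div_iff₀ (by positivity)]
    rwa [pow_succ'] at hm)
  have hmono : 2 ^ (-α) * ∫ h in 0..H, (Real.sin (|(m : ℝ)| * h / 2) ^ 2 - 1 / 8) ≤
      ∫ h in 0..H, |2 * Real.sin (|(m : ℝ)| * h / 2)| ^ α := by
    rw [← intervalIntegral.integral_const_mul]
    refine intervalIntegral.integral_mono hH0 (Continuous.intervalIntegrable (by fun_prop) _ _)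
      (hcont.intervalIntegrable _ _) fun h => mul_sin_sq_sub_le_rpow hα _
  rw [habs, ← ofReal_integral_eq_lintegral_ofReal
    (hcont.integrableOn_Icc.mono_set Set.Ioc_subset_Icc_self) (.of_forall fun h => by positivity),
    ← intervalIntegral.integral_of_le hH0, ← ENNReal.ofReal_mul (by positivity),
    ENNReal.one_le_ofReal]
  have h3 := (mul_le_mul_of_nonneg_left hge (by positivity : (0 : ℝ) ≤ 2 ^ (-α))).trans hmono
  refine le_trans (le_of_eq ?_) (mul_le_mul_of_nonneg_left h3 (by positivity))
  rw [Real.rpow_neg (by norm_num), hH]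
  field_simp

lemma minWeight_le_diffWeight {α : ℝ} (hα : 0 < α) {n : ℕ} {m : ℤ} (hm : |(m : ℝ)| ≤ 2 ^ n) :
    minWeight α n m ≤ ENNReal.ofReal (2 ^ α) * diffWeight α (1 / 2 ^ n) m := by
  rw [minWeight, diffWeight, ← ENNReal.ofReal_mul (by positivity)]
  refine ENNReal.ofReal_le_ofReal ((min_le_right _ _).trans ?_)
  rw [← Real.mul_rpow (by norm_num) (abs_nonneg _)]
  refine Real.rpow_le_rpow (by positivity) ?_ hα.le
  set y := |(m : ℝ)| / 2 ^ n with hy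
  have hy0 : 0 ≤ y := by positivity
  have hy1 : y ≤ 1 := (div_le_one (by positivity)).2 hm
  have e : |2 * Real.sin (m * (1 / 2 ^ n) / 2)| = |2 * Real.sin (y / 2)| := by
    rw [hy]
    rcases abs_choice (m : ℝ) with e | e <;> rw [e]
    · ring_nf
    · rw [show (m : ℝ) * (1 / 2 ^ n) / 2 = -(-m / 2 ^ n / 2) by ring, Real.sin_neg, mul_neg,
        abs_neg]
  rw [e]
  have hpi := Real.pi_gt_three
  have h1 := Real.mul_le_sin (x := y / 2) (by positivity) (by linarith)
  have h2 : y / 4 ≤ 2 / Real.pi * (y / 2) := by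
    have : 1 / 2 ≤ 2 / Real.pi := by
      rw [le_div_iff₀ Real.pi_pos]; linarith [Real.pi_le_four]
    nlinarith
  rw [abs_of_nonneg (by linarith)]
  linarith

lemma tsum_minWeight_le {α : ℝ} (hα : 0 < α) (n : ℕ) {A : ℤ → ℝ≥0∞}
    (hA : ∀ m : ℤ, (∀ j : ℕ, m.natAbs ≠ 2 ^ j) → A m = 0) {S : ℝ≥0∞}
    (hS : ∀ h : ℝ, |h| ≤ 1 / 2 ^ n → ∑' m, diffWeight α h m * A m ≤ S) :
    ∑' m, minWeight α n m * A m ≤ ENNReal.ofReal (9 * 2 ^ α) * S := by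
  set D : ℤ → ℝ≥0∞ := fun m => ∫⁻ h in Set.Ioc (0 : ℝ) (1 / 2 ^ n), diffWeight α h m with hD
  have hpt (m : ℤ) : minWeight α n m * A m ≤
      ENNReal.ofReal (2 ^ α) * (diffWeight α (1 / 2 ^ n) m * A m) +
        ENNReal.ofReal (2 ^ α * 8 * 2 ^ n) * (D m * A m) := by
    by_cases hm : ∀ j : ℕ, m.natAbs ≠ 2 ^ j
    · simp [hA m hm]
    push Not at hm
    obtain ⟨j, hj⟩ := hm
    have habs := abs_intCast_eq_two_pow hj
    rw [← mul_assoc, ← mul_assoc, ← add_mul]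
    refine mul_le_mul_left ?_ _
    rcases Nat.lt_or_ge n j with h | h
    · refine le_trans ?_ (le_lintegral_diffWeight hα (n := n) (m := m) ?_) |>.trans le_add_self
      · rw [minWeight]
        exact ENNReal.ofReal_le_one.2 (min_le_left _ _)
      · rw [habs]; exact pow_le_pow_right₀ (by norm_num) h
    · refine (minWeight_le_diffWeight hα ?_).trans le_self_add
      rw [habs]; exact pow_le_pow_right₀ (by norm_num) h
  have hDsum : ∑' m, D m * A m ≤ ENNReal.ofReal (1 / 2 ^ n) * S := by
    have hmeas (m : ℤ) : Measurable fun h => diffWeight α h m :=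
      (continuous_diffWeight hα m).measurable.ennreal_ofReal
    have e : ∑' m, D m * A m =
        ∫⁻ h in Set.Ioc (0 : ℝ) (1 / 2 ^ n), ∑' m, diffWeight α h m * A m := by
      rw [lintegral_tsum fun m => ((hmeas m).mul_const _).aemeasurable]
      congr 1 with m
      rw [lintegral_mul_const _ (hmeas m)]
    rw [e]
    calc _ ≤ ∫⁻ _ in Set.Ioc (0 : ℝ) (1 / 2 ^ n), S := by
          refine setLIntegral_mono measurable_const fun h hh => hS h ?_
          rw [abs_of_pos hh.1]; exact hh.2
      _ = _ := by rw [setLIntegral_const, Real.volume_Ioc, sub_zero, mul_comm]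
  calc _ ≤ _ := ENNReal.tsum_le_tsum hpt
    _ = ENNReal.ofReal (2 ^ α) * ∑' m, diffWeight α (1 / 2 ^ n) m * A m +
        ENNReal.ofReal (2 ^ α * 8 * 2 ^ n) * ∑' m, D m * A m := by
      rw [ENNReal.tsum_add, ENNReal.tsum_mul_left, ENNReal.tsum_mul_left]
    _ ≤ ENNReal.ofReal (2 ^ α) * S +
        ENNReal.ofReal (2 ^ α * 8 * 2 ^ n) * (ENNReal.ofReal (1 / 2 ^ n) * S) := by
      gcongr
      exact hS _ (abs_of_pos (by positivity)).le
    _ = _ := by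
      rw [← mul_assoc, ← ENNReal.ofReal_mul (by positivity), ← add_mul,
        ← ENNReal.ofReal_add (by positivity) (by positivity)]
      congr 2
      field_simp
      ring

/-- For `f ∈ L_∞(𝕋)` with lacunary Fourier series and `α > 0`,
`ω_α(f,2^{-n})_∞ ≍ ∑_{k=n}^∞ 2^{-αk} ‖(η_{2^k}f)^{(α)}‖_∞`. -/
theorem stmt17 (η : ℝ → ℝ) (hη_smooth : ContDiffOn ℝ (⊤ : ℕ∞) η (Set.Ici 0))
    (hη_one : ∀ ξ : ℝ, ξ ≤ 1 / 2 → η ξ = 1) (hη_zero : ∀ ξ : ℝ, 1 ≤ ξ → η ξ = 0)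
    (α : ℝ) (hα : 0 < α) :
    ∃ c C : ℝ≥0∞, 0 < c ∧ C ≠ ∞ ∧
      ∀ f : ℝ → ℂ, Periodic2PiOne f →
        AEStronglyMeasurable f circleMeasure →
        eLpNorm f ∞ circleMeasure ≠ ∞ →
        LacunaryFourier f →
        ∀ n : ℕ, 1 ≤ n →
          c * (∑' k : ℕ,
                (2 : ℝ≥0∞) ^ (-((n + k : ℕ) : ℝ) * α) *
                  eLpNorm (vdpWeylOne η α (2 ^ (n + k)) f) ∞ circleMeasure)
            ≤ fracModSmoothOne α ∞ f (1 / 2 ^ n) ∧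
          fracModSmoothOne α ∞ f (1 / 2 ^ n)
            ≤ C * ∑' k : ℕ,
                (2 : ℝ≥0∞) ^ (-((n + k : ℕ) : ℝ) * α) *
                  eLpNorm (vdpWeylOne η α (2 ^ (n + k)) f) ∞ circleMeasure := by
  have hr1 : (2 : ℝ) ^ (-α) < 1 := Real.rpow_lt_one_of_one_lt_of_neg (by norm_num) (by linarith)
  set C₁ : ℝ≥0∞ := ENNReal.ofReal (1 - 2 ^ (-α))⁻¹ * (ENNReal.ofReal (9 * 2 ^ α) * 8) with hC₁
  have hC₁top : C₁ ≠ ∞ :=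
    ENNReal.mul_ne_top ENNReal.ofReal_ne_top (ENNReal.mul_ne_top ENNReal.ofReal_ne_top (by simp))
  refine ⟨C₁⁻¹, ENNReal.ofReal (2 ^ α) * (ENNReal.ofReal (2 ^ α) * 8),
    ENNReal.inv_pos.2 hC₁top, ENNReal.mul_ne_top ENNReal.ofReal_ne_top
      (ENNReal.mul_ne_top ENNReal.ofReal_ne_top (by simp)), ?_⟩
  intro f hper hf hfin hlac n _
  set A : ℤ → ℝ≥0∞ := fun m => ‖fourierCoeffOne f m‖ₑ with hAdef
  have hA (m : ℤ) (hm : ∀ j : ℕ, m.natAbs ≠ 2 ^ j) : A m = 0 := by simp [hAdef, hlac m hm]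
  have hdiff := eLpNorm_fracDiffOne_bounds hα hper hf hfin hlac
  have hderiv := eLpNorm_vdpWeylOne_bounds hη_one hη_zero hα hf hfin hlac
  have hswap : ∑' k : ℕ, (2 : ℝ≥0∞) ^ (-((n + k : ℕ) : ℝ) * α) *
      ∑' m, derivWeight α (n + k) m * A m =
      ∑' m, (∑' k : ℕ, (2 : ℝ≥0∞) ^ (-((n + k : ℕ) : ℝ) * α) * derivWeight α (n + k) m) * A m := by
    simp_rw [← ENNReal.tsum_mul_left, ← ENNReal.tsum_mul_right, ← mul_assoc]
    exact ENNReal.tsum_comm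
  constructor
  · rw [mul_comm, ← div_eq_mul_inv]
    refine ENNReal.div_le_of_le_mul' ?_
    calc _ ≤ ∑' k : ℕ, (2 : ℝ≥0∞) ^ (-((n + k : ℕ) : ℝ) * α) *
          ∑' m, derivWeight α (n + k) m * A m :=
        ENNReal.tsum_le_tsum fun k => mul_le_mul_right (hderiv (n + k)).1 _
      _ ≤ ∑' m, ENNReal.ofReal (1 - 2 ^ (-α))⁻¹ * (minWeight α n m * A m) := by
        rw [hswap]
        refine ENNReal.tsum_le_tsum fun m => ?_
        by_cases hm : ∀ j : ℕ, m.natAbs ≠ 2 ^ j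
        · simp [hA m hm]
        push Not at hm
        obtain ⟨j, hj⟩ := hm
        rw [← mul_assoc]
        exact mul_le_mul_left (tsum_le_minWeight hα n hj) _
      _ ≤ ENNReal.ofReal (1 - 2 ^ (-α))⁻¹ * (ENNReal.ofReal (9 * 2 ^ α) *
          (8 * fracModSmoothOne α ∞ f (1 / 2 ^ n))) := by
        rw [ENNReal.tsum_mul_left]
        refine mul_le_mul_right (tsum_minWeight_le hα n hA fun h hh => ?_) _
        refine (hdiff h).2.trans (mul_le_mul_right ?_ _)
        exact le_iSup (fun h : {h : ℝ // |h| ≤ 1 / 2 ^ n} =>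
          eLpNorm (fracDiffOne α h.1 f) ∞ circleMeasure) ⟨h, hh⟩
      _ = _ := by rw [hC₁]; ring
  · refine iSup_le fun h => (hdiff h.1).1.trans ?_
    calc _ ≤ ∑' m, ENNReal.ofReal (2 ^ α) * (minWeight α n m * A m) := by
          refine ENNReal.tsum_le_tsum fun m => ?_
          rw [← mul_assoc]
          exact mul_le_mul_left (diffWeight_le_minWeight hα h.2 m) _
      _ ≤ ENNReal.ofReal (2 ^ α) * (ENNReal.ofReal (2 ^ α) *
          ∑' k : ℕ, (2 : ℝ≥0∞) ^ (-((n + k : ℕ) : ℝ) * α) *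
            ∑' m, derivWeight α (n + k) m * A m) := by
        rw [ENNReal.tsum_mul_left, hswap]
        refine mul_le_mul_right ?_ _
        rw [← ENNReal.tsum_mul_left]
        refine ENNReal.tsum_le_tsum fun m => ?_
        by_cases hm : ∀ j : ℕ, m.natAbs ≠ 2 ^ j
        · simp [hA m hm]
        push Not at hm
        obtain ⟨j, hj⟩ := hm
        rw [← mul_assoc]
        exact mul_le_mul_left (minWeight_le_tsum hα n hj) _
      _ ≤ ENNReal.ofReal (2 ^ α) * (ENNReal.ofReal (2 ^ α) *
          ∑' k : ℕ, 8 * ((2 : ℝ≥0∞) ^ (-((n + k : ℕ) : ℝ) * α) *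
            eLpNorm (vdpWeylOne η α (2 ^ (n + k)) f) ∞ circleMeasure)) := by
        refine mul_le_mul_right (mul_le_mul_right (ENNReal.tsum_le_tsum fun k => ?_) _) _
        exact (mul_le_mul_right (hderiv (n + k)).2 _).trans_eq (by ring)
      _ = _ := by rw [ENNReal.tsum_mul_left]; ring
end

section
/- Let p = 1 or p = ∞ and α ∈ ℕ. Then for every q > 0 and every constant C > 0 there exist a function f ∈ L_p(𝕋) and an n ∈ ℕ such that (Σ_{k=n+1}^∞ 2^{-qαk}‖(η_{2^k}f)^{(α)}‖_{L_p(𝕋)}^q)^{1/q} > C·ω_α(f, 2^{-n})_{L_p(𝕋)}. In other words, the inequality (Σ_{k=n+1}^∞ 2^{-qαk}‖(η_{2^k}f)^{(α)}‖_{L_p(𝕋)}^q)^{1/q} ≤ C·ω_α(f, 2^{-n})_{L_p(𝕋)} cannot hold with a constant C independent of n and f. -/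
open scoped ENNReal
open MeasureTheory

/-- The de la Vallée Poussin mean `η_N f(x) = ∑_m η(|m|/N) \hat f(m) e^{imx}`. -/
noncomputable def vdpMeanOne (η : ℝ → ℝ) (N : ℕ) (f : ℝ → ℂ) : ℝ → ℂ :=
  fun x => ∑' m : ℤ,
    ((η (|(m : ℝ)| / N) : ℝ) : ℂ) * fourierCoeffOne f m * Complex.exp (Complex.I * m * x)

/-- Integration against the circle measure is integration over `0..2π`. -/
lemma integral_circleMeasure (g : ℝ → ℂ) :
    ∫ x, g x ∂circleMeasure = ∫ x in (0 : ℝ)..(2 * Real.pi), g x := by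
  rw [circleMeasure, intervalIntegral.integral_of_le (by positivity),
    integral_Icc_eq_integral_Ioc]

lemma integrable_circleMeasure_of_continuous {g : ℝ → ℂ} (hg : Continuous g) :
    Integrable g circleMeasure :=
  hg.continuousOn.integrableOn_compact isCompact_Icc

instance inst_s19 : IsFiniteMeasure circleMeasure := by
  unfold circleMeasure
  infer_instance

lemma integral_exp_circleMeasure (m : ℤ) :
    ∫ x : ℝ, Complex.exp (Complex.I * m * x) ∂circleMeasure =
      if m = 0 then (2 * Real.pi : ℂ) else 0 := by
  rw [integral_circleMeasure]
  split_ifs with h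
  · simp [h]
  · have h0 : Complex.I * (m : ℂ) ≠ 0 := by simp [h]
    rw [integral_exp_mul_complex h0]
    have : Complex.exp (Complex.I * m * ((2 * Real.pi : ℝ) : ℂ)) = 1 := by
      rw [Complex.exp_eq_one_iff]
      exact ⟨m, by push_cast; ring⟩
    rw [this]
    simp

lemma integral_trigPoly_mul_exp (s : Finset ℤ) (c : ℤ → ℂ) {m : ℤ} (hm : m ∈ s) :
    ∫ x : ℝ, (∑ k ∈ s, c k * Complex.exp (Complex.I * k * x)) *
      Complex.exp (-(Complex.I * m * x)) ∂circleMeasure = 2 * Real.pi * c m := by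
  have h : ∀ x : ℝ, (∑ k ∈ s, c k * Complex.exp (Complex.I * k * x)) *
      Complex.exp (-(Complex.I * m * x)) =
      ∑ k ∈ s, c k * Complex.exp (Complex.I * ((k - m : ℤ) : ℂ) * x) := by
    intro x
    rw [Finset.sum_mul]
    refine Finset.sum_congr rfl fun k _ => ?_
    rw [mul_assoc, ← Complex.exp_add]
    congr 2
    push_cast
    ring
  simp_rw [h]
  rw [integral_finsetSum _ fun k _ =>
    integrable_circleMeasure_of_continuous (by fun_prop)]
  simp_rw [integral_const_mul, integral_exp_circleMeasure]
  rw [Finset.sum_eq_single m]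
  · simp [mul_comm]
  · intro k _ hk
    rw [if_neg (sub_ne_zero.mpr hk), mul_zero]
  · exact fun h => absurd hm h

lemma deriv_iterate_trigPoly (s : Finset ℤ) (α : ℕ) (c : ℤ → ℂ) :
    deriv^[α] (fun x : ℝ => ∑ k ∈ s, c k * Complex.exp (Complex.I * k * x)) =
      fun x : ℝ => ∑ k ∈ s, (c k * (Complex.I * k) ^ α) * Complex.exp (Complex.I * k * x) := by
  induction α generalizing c with
  | zero => simp
  | succ α ih =>
    have h : deriv (fun x : ℝ => ∑ k ∈ s, c k * Complex.exp (Complex.I * k * x)) =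
        fun x : ℝ => ∑ k ∈ s, (c k * (Complex.I * k)) * Complex.exp (Complex.I * k * x) := by
      funext x
      refine HasDerivAt.deriv (HasDerivAt.fun_sum fun k _ => ?_)
      have h1 : HasDerivAt (fun x : ℝ => Complex.I * k * (x : ℂ)) (Complex.I * k) x := by
        simpa using (Complex.ofRealCLM.hasDerivAt (x := x)).const_mul (Complex.I * (k : ℂ))
      refine (h1.cexp.const_mul (c k)).congr_deriv ?_
      ring
    rw [Function.iterate_succ_apply, h, ih]
    funext x
    refine Finset.sum_congr rfl fun k _ => ?_
    ring

lemma vdpMeanOne_eq_sum {η : ℝ → ℝ} (hη_zero : ∀ ξ : ℝ, 1 ≤ ξ → η ξ = 0) {N : ℕ} (hN : 0 < N)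
    (f : ℝ → ℂ) :
    vdpMeanOne η N f = fun x : ℝ => ∑ m ∈ Finset.Icc (-(N : ℤ)) N,
      (((η (|(m : ℝ)| / N) : ℝ) : ℂ) * fourierCoeffOne f m) *
        Complex.exp (Complex.I * m * x) := by
  funext x
  refine tsum_eq_sum fun m hm => ?_
  have hm' : (N : ℤ) ≤ |m| := by
    by_contra! h
    exact hm (Finset.mem_Icc.mpr (abs_le.mp h.le))
  have hm'' : (N : ℝ) ≤ |(m : ℝ)| := by exact_mod_cast hm'
  rw [hη_zero _ ((one_le_div (by exact_mod_cast hN)).mpr hm'')]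
  simp

lemma continuous_deriv_iterate_vdpMeanOne {η : ℝ → ℝ} (hη_zero : ∀ ξ : ℝ, 1 ≤ ξ → η ξ = 0)
    {N : ℕ} (hN : 0 < N) (f : ℝ → ℂ) (α : ℕ) : Continuous (deriv^[α] (vdpMeanOne η N f)) := by
  rw [vdpMeanOne_eq_sum hη_zero hN, deriv_iterate_trigPoly]
  fun_prop

/-- Low-frequency Fourier coefficients of the derivatives of the de la Vallée Poussin means. -/
lemma integral_deriv_iterate_vdpMeanOne_mul_exp {η : ℝ → ℝ}
    (hη_one : ∀ ξ : ℝ, ξ ≤ 1 / 2 → η ξ = 1) (hη_zero : ∀ ξ : ℝ, 1 ≤ ξ → η ξ = 0)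
    {N : ℕ} (hN : 0 < N) (f : ℝ → ℂ) (α : ℕ) {m : ℤ} (hm : 2 * |m| ≤ N) :
    ∫ x : ℝ, (deriv^[α] (vdpMeanOne η N f)) x * Complex.exp (-(Complex.I * m * x))
      ∂circleMeasure = 2 * Real.pi * (fourierCoeffOne f m * (Complex.I * m) ^ α) := by
  have hmem : m ∈ Finset.Icc (-(N : ℤ)) N :=
    Finset.mem_Icc.mpr (abs_le.mp (by have := abs_nonneg m; omega))
  rw [vdpMeanOne_eq_sum hη_zero hN, deriv_iterate_trigPoly, integral_trigPoly_mul_exp _ _ hmem]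
  have hm' : 2 * |(m : ℝ)| ≤ N := by exact_mod_cast hm
  have h1 : |(m : ℝ)| / N ≤ 1 / 2 := by
    rw [div_le_iff₀ (by exact_mod_cast hN)]
    linarith
  rw [hη_one _ h1]
  simp

/-- The Fejér kernel `M⁻¹ ∑_{j,l<M} e^{i(j-l)x}`. -/
noncomputable def fejerKernel (M : ℕ) (x : ℝ) : ℂ :=
  (M : ℂ)⁻¹ * ∑ j ∈ Finset.range M, ∑ l ∈ Finset.range M,
    Complex.exp (Complex.I * ((j - l : ℤ) : ℂ) * x)

lemma continuous_fejerKernel (M : ℕ) : Continuous (fejerKernel M) := by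
  unfold fejerKernel
  fun_prop

lemma fejerKernel_periodic (M : ℕ) : Periodic2PiOne (fejerKernel M) := by
  intro x
  unfold fejerKernel
  congr 1
  refine Finset.sum_congr rfl fun j _ => Finset.sum_congr rfl fun l _ => ?_
  rw [Complex.exp_eq_exp_iff_exists_int]
  exact ⟨j - l, by push_cast; ring⟩

lemma fejerKernel_eq_normSq (M : ℕ) (x : ℝ) :
    fejerKernel M x = (((M : ℝ)⁻¹ * Complex.normSq
      (∑ j ∈ Finset.range M, Complex.exp (Complex.I * j * x)) : ℝ) : ℂ) := by
  rw [Complex.ofReal_mul, Complex.normSq_eq_conj_mul_self, mul_comm ((starRingEnd ℂ) _), map_sum,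
    Finset.sum_mul_sum, fejerKernel]
  push_cast
  congr 1
  refine Finset.sum_congr rfl fun j _ => Finset.sum_congr rfl fun l _ => ?_
  rw [← Complex.exp_conj, ← Complex.exp_add]
  congr 1
  simp
  ring

lemma integral_fejerKernel {M : ℕ} (hM : 0 < M) :
    ∫ x, fejerKernel M x ∂circleMeasure = 2 * Real.pi := by
  unfold fejerKernel
  rw [integral_const_mul, integral_finsetSum _ fun j _ =>
    integrable_circleMeasure_of_continuous (by fun_prop)]
  have : ∀ j ∈ Finset.range M, ∫ x : ℝ, ∑ l ∈ Finset.range M,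
      Complex.exp (Complex.I * ((j - l : ℤ) : ℂ) * x) ∂circleMeasure = 2 * Real.pi := by
    intro j hj
    rw [integral_finsetSum _ fun l _ =>
      integrable_circleMeasure_of_continuous (by fun_prop)]
    simp_rw [integral_exp_circleMeasure]
    rw [Finset.sum_eq_single j]
    · simp
    · intro l _ hl
      rw [if_neg (by omega)]
    · exact fun h => absurd hj h
  rw [Finset.sum_congr rfl this]
  have : (M : ℂ) ≠ 0 := by exact_mod_cast hM.ne'
  rw [Finset.sum_const, Finset.card_range, nsmul_eq_mul, inv_mul_cancel_left₀ this]

lemma lintegral_enorm_fejerKernel {M : ℕ} (hM : 0 < M) :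
    ∫⁻ x, ‖fejerKernel M x‖ₑ ∂circleMeasure = ENNReal.ofReal (2 * Real.pi) := by
  rw [← ofReal_integral_norm_eq_lintegral_enorm
    (integrable_circleMeasure_of_continuous (continuous_fejerKernel M))]
  congr 1
  have h : ∀ x, ((‖fejerKernel M x‖ : ℝ) : ℂ) = fejerKernel M x := by
    intro x
    rw [fejerKernel_eq_normSq, Complex.norm_real, Real.norm_of_nonneg]
    exact mul_nonneg (by positivity) (Complex.normSq_nonneg _)
  have h2 := integral_fejerKernel hM
  rw [← integral_congr_ae (.of_forall h), integral_complex_ofReal] at h2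
  exact_mod_cast h2

lemma half_le_norm_fourierCoeffOne_fejerKernel {M : ℕ} (hM : 0 < M) {m : ℕ} (hm : 2 * m ≤ M) :
    1 / 2 ≤ ‖fourierCoeffOne (fejerKernel M) m‖ := by
  have hpi := Real.pi_pos
  have key : fourierCoeffOne (fejerKernel M) m =
      (((M : ℝ)⁻¹ * ∑ j ∈ Finset.range M, ∑ l ∈ Finset.range M,
        (if j = l + m then 1 else 0 : ℝ) : ℝ) : ℂ) := by
    have h : ∀ x : ℝ, fejerKernel M x * Complex.exp (-(Complex.I * (m : ℤ) * x)) =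
        (M : ℂ)⁻¹ * ∑ j ∈ Finset.range M, ∑ l ∈ Finset.range M,
          Complex.exp (Complex.I * ((j - l - m : ℤ) : ℂ) * x) := by
      intro x
      unfold fejerKernel
      rw [mul_assoc, Finset.sum_mul]
      simp_rw [Finset.sum_mul, ← Complex.exp_add]
      congr 1
      refine Finset.sum_congr rfl fun j _ => Finset.sum_congr rfl fun l _ => ?_
      congr 1
      push_cast
      ring
    unfold fourierCoeffOne
    simp_rw [h]
    rw [integral_const_mul, integral_finsetSum _ fun j _ =>
      integrable_circleMeasure_of_continuous (by fun_prop)]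
    have h3 : ∀ j ∈ Finset.range M, ∫ x : ℝ, ∑ l ∈ Finset.range M,
        Complex.exp (Complex.I * ((j - l - m : ℤ) : ℂ) * x) ∂circleMeasure =
        2 * Real.pi * ∑ l ∈ Finset.range M, (if j = l + m then 1 else 0 : ℂ) := by
      intro j hj
      rw [integral_finsetSum _ fun l _ =>
        integrable_circleMeasure_of_continuous (by fun_prop), Finset.mul_sum]
      simp_rw [integral_exp_circleMeasure]
      refine Finset.sum_congr rfl fun l _ => ?_
      by_cases hj : j = l + m
      · rw [if_pos (by omega), if_pos hj, mul_one]
      · rw [if_neg (by omega), if_neg hj, mul_zero]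
    rw [Finset.sum_congr rfl h3, ← Finset.mul_sum, Complex.real_smul]
    have hpi' : (Real.pi : ℂ) ≠ 0 := by exact_mod_cast hpi.ne'
    push_cast
    simp only [apply_ite (Complex.ofReal), Complex.ofReal_one, Complex.ofReal_zero]
    field_simp
  have hcount : (M : ℝ) / 2 ≤ ∑ j ∈ Finset.range M, ∑ l ∈ Finset.range M,
      (if j = l + m then 1 else 0 : ℝ) := by
    rw [Finset.sum_comm]
    calc (M : ℝ) / 2 ≤ ((M - m : ℕ) : ℝ) := by
          rw [Nat.cast_sub (by omega)]
          have : (2 * m : ℝ) ≤ M := by exact_mod_cast hm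
          linarith
      _ = ∑ l ∈ Finset.range (M - m), (1 : ℝ) := by simp
      _ = ∑ l ∈ Finset.range (M - m), ∑ j ∈ Finset.range M,
            (if j = l + m then 1 else 0 : ℝ) := by
          refine Finset.sum_congr rfl fun l hl => ?_
          rw [Finset.sum_ite_eq' (Finset.range M) (l + m) fun _ => (1 : ℝ), if_pos]
          have := Finset.mem_range.mp hl
          exact Finset.mem_range.mpr (by omega)
      _ ≤ _ := by
          refine Finset.sum_le_sum_of_subset_of_nonneg
            (Finset.range_mono (Nat.sub_le _ _)) fun l _ _ => ?_
          exact Finset.sum_nonneg fun j _ => by split_ifs <;> norm_num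
  have hM' : (0 : ℝ) < M := by exact_mod_cast hM
  rw [key, Complex.norm_real]
  refine le_trans ?_ (le_abs_self _)
  rw [inv_mul_eq_div, le_div_iff₀ hM']
  linarith

/-- The sawtooth function, the `2π`-periodic extension of `x` on `[0,2π)`. -/
noncomputable def sawtooth (x : ℝ) : ℂ :=
  ((2 * Real.pi * Int.fract (x / (2 * Real.pi)) : ℝ) : ℂ)

lemma sawtooth_periodic : Periodic2PiOne sawtooth := by
  intro x
  have : (x + 2 * Real.pi) / (2 * Real.pi) = x / (2 * Real.pi) + 1 := by
    have := Real.pi_pos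
    field_simp
  rw [sawtooth, this, Int.fract_add_one, sawtooth]

lemma measurable_sawtooth : Measurable sawtooth := by
  unfold sawtooth
  exact Complex.measurable_ofReal.comp
    ((measurable_fract.comp (measurable_id.div_const _)).const_mul _)

lemma norm_sawtooth_le (x : ℝ) : ‖sawtooth x‖ ≤ 2 * Real.pi := by
  have hpi := Real.pi_pos
  have h0 := Int.fract_nonneg (x / (2 * Real.pi))
  have h1 := (Int.fract_lt_one (x / (2 * Real.pi))).le
  rw [sawtooth, Complex.norm_real, Real.norm_of_nonneg (by positivity)]
  exact mul_le_of_le_one_right (by positivity) h1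

lemma fourierCoeffOne_sawtooth {m : ℤ} (hm : m ≠ 0) :
    fourierCoeffOne sawtooth m = Complex.I / m := by
  have hpi := Real.pi_pos
  have hm' : (m : ℂ) ≠ 0 := by exact_mod_cast hm
  have h1 : ∫ x, sawtooth x * Complex.exp (-(Complex.I * m * x)) ∂circleMeasure =
      ∫ x in (0 : ℝ)..(2 * Real.pi), (x : ℂ) * Complex.exp (-(Complex.I * m * x)) := by
    rw [integral_circleMeasure, intervalIntegral.integral_of_le (by positivity),
      intervalIntegral.integral_of_le (by positivity), ← integral_Ico_eq_integral_Ioc,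
      ← integral_Ico_eq_integral_Ioc]
    refine setIntegral_congr_fun measurableSet_Ico fun x hx => ?_
    have : Int.fract (x / (2 * Real.pi)) = x / (2 * Real.pi) :=
      Int.fract_eq_self.mpr ⟨div_nonneg hx.1 (by positivity),
        (div_lt_one (by positivity)).mpr hx.2⟩
    simp only [sawtooth]
    rw [this, mul_div_cancel₀ _ (by positivity)]
  have h2 : ∫ x in (0 : ℝ)..(2 * Real.pi), (x : ℂ) * Complex.exp (-(Complex.I * m * x)) =
      2 * Real.pi * (Complex.I / m) := by
    have hd : ∀ x ∈ Set.uIcc (0 : ℝ) (2 * Real.pi), HasDerivAt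
        (fun x : ℝ => ((x : ℂ) * (Complex.I / m) + 1 / (m : ℂ) ^ 2) *
          Complex.exp (-(Complex.I * m * x)))
        ((x : ℂ) * Complex.exp (-(Complex.I * m * x))) x := by
      intro x _
      have h0 : HasDerivAt (fun x : ℝ => (x : ℂ)) 1 x :=
        Complex.ofRealCLM.hasDerivAt
      have ha := (h0.mul_const (Complex.I / m)).add_const (1 / (m : ℂ) ^ 2)
      have hb := ((h0.const_mul (Complex.I * (m : ℂ))).neg).cexp
      refine (ha.mul hb).congr_deriv ?_
      field_simp
      linear_combination (-(x : ℂ) * m * Complex.exp (-(Complex.I * m * x))) * Complex.I_sq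
    rw [intervalIntegral.integral_eq_sub_of_hasDerivAt hd
      ((by fun_prop : Continuous fun x : ℝ =>
        (x : ℂ) * Complex.exp (-(Complex.I * m * x))).intervalIntegrable _ _)]
    have : Complex.exp (-(Complex.I * m * ((2 * Real.pi : ℝ) : ℂ))) = 1 := by
      rw [Complex.exp_eq_one_iff]
      exact ⟨-m, by push_cast; ring⟩
    rw [this]
    simp
  have hpi' : (Real.pi : ℂ) ≠ 0 := by exact_mod_cast hpi.ne'
  rw [fourierCoeffOne, h1, h2, Complex.real_smul]
  push_cast
  field_simp

lemma cDiffOne_periodic {f : ℝ → ℂ} (hf : Periodic2PiOne f) (h : ℝ) :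
    Periodic2PiOne (cDiffOne h f) := by
  intro x
  have : x + 2 * Real.pi + h = x + h + 2 * Real.pi := by ring
  simp only [cDiffOne]
  rw [this, hf, hf]

lemma norm_cDiffOne_iterate_le {f : ℝ → ℂ} {B : ℝ} (hB : ∀ x, ‖f x‖ ≤ B) (h : ℝ) (r : ℕ)
    (x : ℝ) : ‖(cDiffOne h)^[r] f x‖ ≤ 2 ^ r * B := by
  induction r generalizing x with
  | zero => simpa using hB x
  | succ r ih =>
    rw [Function.iterate_succ_apply']
    refine (norm_sub_le _ _).trans ((add_le_add (ih _) (ih _)).trans_eq ?_)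
    ring

lemma eLpNorm_one_add_right {f : ℝ → ℂ} (hf : Periodic2PiOne f) (hc : Continuous f) (h : ℝ) :
    eLpNorm (fun x => f (x + h)) 1 circleMeasure = eLpNorm f 1 circleMeasure := by
  have aux : ∀ g : ℝ → ℂ, Continuous g → eLpNorm g 1 circleMeasure =
      ENNReal.ofReal (∫ x in (0 : ℝ)..(2 * Real.pi), ‖g x‖) := by
    intro g hg
    rw [eLpNorm_one_eq_lintegral_enorm, ← ofReal_integral_norm_eq_lintegral_enorm
      (integrable_circleMeasure_of_continuous hg), circleMeasure,
      intervalIntegral.integral_of_le (by positivity), integral_Icc_eq_integral_Ioc]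
  rw [aux _ (by fun_prop), aux _ hc]
  congr 1
  rw [intervalIntegral.integral_comp_add_right (fun x => ‖f x‖)]
  have hp : Function.Periodic (fun x => ‖f x‖) (2 * Real.pi) := fun x => by
    simp only [hf x]
  have := hp.intervalIntegral_add_eq h 0
  simpa [add_comm] using this

lemma eLpNorm_one_cDiffOne_iterate_le (h : ℝ) (r : ℕ) {f : ℝ → ℂ} (hf : Periodic2PiOne f)
    (hc : Continuous f) :
    eLpNorm ((cDiffOne h)^[r] f) 1 circleMeasure ≤ 2 ^ r * eLpNorm f 1 circleMeasure := by
  induction r generalizing f with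
  | zero => simp
  | succ r ih =>
    have hc' : Continuous (cDiffOne h f) := by
      unfold cDiffOne
      fun_prop
    have h1 : eLpNorm (cDiffOne h f) 1 circleMeasure ≤ 2 * eLpNorm f 1 circleMeasure := by
      refine (eLpNorm_sub_le (f := fun x => f (x + h)) (g := f)
        (by fun_prop : Continuous fun x => f (x + h)).aestronglyMeasurable
        hc.aestronglyMeasurable le_rfl).trans_eq ?_
      rw [eLpNorm_one_add_right hf hc, two_mul]
    rw [Function.iterate_succ_apply, pow_succ, mul_assoc]
    exact (ih (cDiffOne_periodic hf h) hc').trans (by gcongr)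

lemma pow_half_le_eLpNorm_one_fejerKernel {η : ℝ → ℝ}
    (hη_one : ∀ ξ : ℝ, ξ ≤ 1 / 2 → η ξ = 1) (hη_zero : ∀ ξ : ℝ, 1 ≤ ξ → η ξ = 0)
    {L M : ℕ} (hM : 0 < M) (hL : 2 * M ≤ L) (α : ℕ) :
    ENNReal.ofReal ((M : ℝ) ^ α / 2) ≤
      eLpNorm (deriv^[α] (vdpMeanOne η (4 * M) (fejerKernel L))) 1 circleMeasure := by
  have hpi := Real.pi_gt_three
  have hint := integral_deriv_iterate_vdpMeanOne_mul_exp hη_one hη_zero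
    (N := 4 * M) (by omega) (fejerKernel L) α (m := M) (by push_cast; simp; omega)
  have hle := enorm_integral_le_lintegral_enorm (μ := circleMeasure) (fun x : ℝ =>
    (deriv^[α] (vdpMeanOne η (4 * M) (fejerKernel L))) x *
      Complex.exp (-(Complex.I * (M : ℤ) * x)))
  rw [hint] at hle
  have hexp : ∀ x : ℝ, ‖Complex.exp (-(Complex.I * (M : ℤ) * x))‖ₑ = 1 := by
    intro x
    rw [← ofReal_norm, Complex.norm_exp]
    simp
  simp_rw [enorm_mul, hexp, mul_one] at hle
  rw [eLpNorm_one_eq_lintegral_enorm]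
  refine le_trans ?_ hle
  simp_rw [← enorm_mul]
  rw [← ofReal_norm]
  refine ENNReal.ofReal_le_ofReal ?_
  have hF := half_le_norm_fourierCoeffOne_fejerKernel (M := L) (by omega) (m := M) hL
  simp only [norm_mul, norm_pow, Complex.norm_I, Complex.norm_ofNat, Complex.norm_real, one_mul,
    Int.cast_natCast, Real.norm_of_nonneg Real.pi_pos.le, RCLike.norm_natCast]
  have : (0 : ℝ) ≤ (M : ℝ) ^ α := by positivity
  nlinarith [mul_le_mul_of_nonneg_right hF this]

lemma pow_half_le_eLpNorm_top_sawtooth {η : ℝ → ℝ}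
    (hη_one : ∀ ξ : ℝ, ξ ≤ 1 / 2 → η ξ = 1) (hη_zero : ∀ ξ : ℝ, 1 ≤ ξ → η ξ = 0)
    {M : ℕ} (hM : 0 < M) {α : ℕ} (hα : 0 < α) :
    ENNReal.ofReal ((M : ℝ) ^ α / 2) ≤
      eLpNorm (deriv^[α] (vdpMeanOne η (4 * M) sawtooth)) ∞ circleMeasure := by
  have hpi := Real.pi_pos
  obtain ⟨β, rfl⟩ : ∃ β, α = β + 1 := ⟨α - 1, by omega⟩
  set T := deriv^[β + 1] (vdpMeanOne η (4 * M) sawtooth) with hT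
  have hTc : Continuous T := continuous_deriv_iterate_vdpMeanOne hη_zero (by omega) _ _
  have hint : ∀ m : ℤ, 0 < m → m ≤ 2 * M →
      ∫ x : ℝ, T x * Complex.exp (-(Complex.I * m * x)) ∂circleMeasure =
        2 * Real.pi * Complex.I ^ (β + 2) * ((m : ℝ) ^ β : ℝ) := by
    intro m hm hm2
    rw [hT, integral_deriv_iterate_vdpMeanOne_mul_exp hη_one hη_zero (by omega) _ _
      (by rw [abs_of_pos hm]; push_cast; omega), fourierCoeffOne_sawtooth hm.ne']
    have : (m : ℂ) ≠ 0 := by exact_mod_cast hm.ne'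
    push_cast
    rw [mul_pow, pow_succ (m : ℂ)]
    field_simp
    ring
  set g : ℝ → ℂ := fun x => fejerKernel M x * Complex.exp (-(Complex.I * M * x)) with hg
  have hTg : ∫ x, T x * g x ∂circleMeasure = 2 * Real.pi * Complex.I ^ (β + 2) *
      (((M : ℝ)⁻¹ * ∑ j ∈ Finset.range M, ∑ l ∈ Finset.range M,
        ((M + l - j : ℤ) : ℝ) ^ β : ℝ) : ℂ) := by
    have h : ∀ x, T x * g x = (M : ℂ)⁻¹ * ∑ j ∈ Finset.range M, ∑ l ∈ Finset.range M,
        T x * Complex.exp (-(Complex.I * ((M + l - j : ℤ) : ℂ) * x)) := by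
      intro x
      simp only [hg, fejerKernel]
      rw [mul_assoc, mul_left_comm, Finset.sum_mul]
      simp_rw [Finset.sum_mul, ← Complex.exp_add]
      rw [Finset.mul_sum]
      simp_rw [Finset.mul_sum (Finset.range M) _ (T x)]
      congr 1
      refine Finset.sum_congr rfl fun j _ => Finset.sum_congr rfl fun l _ => ?_
      congr 2
      push_cast
      ring
    simp_rw [h]
    rw [integral_const_mul, integral_finsetSum _ fun j _ =>
      integrable_circleMeasure_of_continuous (by fun_prop)]
    have h3 : ∀ j ∈ Finset.range M, ∫ x : ℝ, ∑ l ∈ Finset.range M,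
        T x * Complex.exp (-(Complex.I * ((M + l - j : ℤ) : ℂ) * x)) ∂circleMeasure =
        2 * Real.pi * Complex.I ^ (β + 2) *
          ∑ l ∈ Finset.range M, ((((M + l - j : ℤ) : ℝ) ^ β : ℝ) : ℂ) := by
      intro j hj
      rw [integral_finsetSum _ fun l _ =>
        integrable_circleMeasure_of_continuous (by fun_prop), Finset.mul_sum]
      refine Finset.sum_congr rfl fun l hl => ?_
      rw [Finset.mem_range] at hj hl
      exact hint _ (by omega) (by omega)
    rw [Finset.sum_congr rfl h3, ← Finset.mul_sum]
    push_cast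
    ring
  have hsum : (M : ℝ) ^ (β + 2) / 2 ≤ ∑ j ∈ Finset.range M, ∑ l ∈ Finset.range M,
      ((M + l - j : ℤ) : ℝ) ^ β := by
    set S := ∑ j ∈ Finset.range M, ∑ l ∈ Finset.range M, ((M + l - j : ℤ) : ℝ) ^ β with hS
    have hS' : S = ∑ j ∈ Finset.range M, ∑ l ∈ Finset.range M, ((M + j - l : ℤ) : ℝ) ^ β :=
      Finset.sum_comm
    have h2 : (M : ℝ) ^ (β + 2) ≤ S + S := by
      nth_rewrite 2 [hS']
      rw [hS, ← Finset.sum_add_distrib]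
      simp_rw [← Finset.sum_add_distrib]
      calc (M : ℝ) ^ (β + 2) =
            ∑ j ∈ Finset.range M, ∑ l ∈ Finset.range M, (M : ℝ) ^ β := by
            simp
            ring
        _ ≤ _ := by
            refine Finset.sum_le_sum fun j hj => Finset.sum_le_sum fun l hl => ?_
            rw [Finset.mem_range] at hj hl
            have hn1 : (0 : ℝ) ≤ ((M + l - j : ℤ) : ℝ) := by
              exact_mod_cast (by omega : (0 : ℤ) ≤ M + l - j)
            have hn2 : (0 : ℝ) ≤ ((M + j - l : ℤ) : ℝ) := by
              exact_mod_cast (by omega : (0 : ℤ) ≤ M + j - l)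
            rcases le_total j l with hjl | hjl
            · have : (M : ℝ) ≤ ((M + l - j : ℤ) : ℝ) := by
                exact_mod_cast (by omega : (M : ℤ) ≤ M + l - j)
              exact le_add_of_le_of_nonneg (by gcongr) (by positivity)
            · have : (M : ℝ) ≤ ((M + j - l : ℤ) : ℝ) := by
                exact_mod_cast (by omega : (M : ℤ) ≤ M + j - l)
              exact le_add_of_nonneg_of_le (by positivity) (by gcongr)
    linarith
  have hgn : ∫⁻ x, ‖g x‖ₑ ∂circleMeasure = ENNReal.ofReal (2 * Real.pi) := by
    rw [← lintegral_enorm_fejerKernel hM]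
    refine lintegral_congr fun x => ?_
    have : ‖Complex.exp (-(Complex.I * M * x))‖ₑ = 1 := by
      rw [← ofReal_norm, Complex.norm_exp]
      simp
    rw [hg, enorm_mul, this, mul_one]
  have hHolder : ‖∫ x, T x * g x ∂circleMeasure‖ₑ ≤
      eLpNorm T ∞ circleMeasure * ENNReal.ofReal (2 * Real.pi) := by
    refine (enorm_integral_le_lintegral_enorm _).trans ?_
    have hgm : Measurable fun x => ‖g x‖ₑ := by
      have : Continuous g := by
        have := continuous_fejerKernel M
        fun_prop
      exact this.measurable.enorm
    rw [← hgn, ← lintegral_const_mul _ hgm, eLpNorm_exponent_top]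
    refine lintegral_mono_ae ?_
    filter_upwards [ae_le_eLpNormEssSup (f := T) (μ := circleMeasure)] with x hx
    rw [enorm_mul]
    gcongr
  have hlow : ENNReal.ofReal ((M : ℝ) ^ (β + 1) / 2) * ENNReal.ofReal (2 * Real.pi) ≤
      ‖∫ x, T x * g x ∂circleMeasure‖ₑ := by
    rw [hTg, ← ofReal_norm, ← ENNReal.ofReal_mul (by positivity)]
    refine ENNReal.ofReal_le_ofReal ?_
    have hM' : (0 : ℝ) < M := by exact_mod_cast hM
    rw [norm_mul, norm_mul, norm_mul, norm_pow, Complex.norm_I, one_pow, mul_one,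
      Complex.norm_real, Complex.norm_real, Real.norm_of_nonneg hpi.le, Complex.norm_ofNat,
      mul_comm]
    refine mul_le_mul_of_nonneg_left (le_trans ?_ (le_abs_self _)) (by positivity)
    rw [inv_mul_eq_div, le_div_iff₀ hM']
    refine le_trans (le_of_eq ?_) hsum
    ring
  exact (ENNReal.mul_le_mul_iff_left (by simpa using hpi) ENNReal.ofReal_ne_top).mp
    (hlow.trans hHolder)

/-- There are functions with norm and modulus of smoothness bounded uniformly in `K` for which the
first `K` of the dyadic derivative terms are bounded below. -/
lemma exists_bounded_modSmoothOne_and_le_eLpNorm {p : ℝ≥0∞} (hp : p = 1 ∨ p = ∞) {α : ℕ}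
    (hα : 0 < α) {η : ℝ → ℝ}
    (hη_one : ∀ ξ : ℝ, ξ ≤ 1 / 2 → η ξ = 1) (hη_zero : ∀ ξ : ℝ, 1 ≤ ξ → η ξ = 0) (K : ℕ) :
    ∃ f : ℝ → ℂ, Periodic2PiOne f ∧ AEStronglyMeasurable f circleMeasure ∧
      eLpNorm f p circleMeasure ≠ ∞ ∧
      (∀ δ, modSmoothOne α p f δ ≤ ENNReal.ofReal (2 ^ α * (2 * Real.pi))) ∧
      ∀ k < K, ENNReal.ofReal (((2 ^ k : ℕ) : ℝ) ^ α / 2) ≤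
        eLpNorm (deriv^[α] (vdpMeanOne η (4 * 2 ^ k) f)) p circleMeasure := by
  rcases hp with rfl | rfl
  · have hL : 0 < 2 ^ K := by positivity
    have hnorm : eLpNorm (fejerKernel (2 ^ K)) 1 circleMeasure =
        ENNReal.ofReal (2 * Real.pi) := by
      rw [eLpNorm_one_eq_lintegral_enorm, lintegral_enorm_fejerKernel hL]
    refine ⟨fejerKernel (2 ^ K), fejerKernel_periodic _,
      (continuous_fejerKernel _).aestronglyMeasurable, hnorm ▸ ENNReal.ofReal_ne_top, fun δ => ?_,
      fun k hk => pow_half_le_eLpNorm_one_fejerKernel hη_one hη_zero (by positivity) ?_ α⟩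
    · refine iSup_le fun h => ?_
      refine (eLpNorm_one_cDiffOne_iterate_le h.1 α (fejerKernel_periodic _)
        (continuous_fejerKernel _)).trans_eq ?_
      rw [hnorm, ENNReal.ofReal_mul (p := 2 ^ α) (by positivity),
        ENNReal.ofReal_pow (by norm_num), ENNReal.ofReal_ofNat]
    · rw [← pow_succ']
      exact Nat.pow_le_pow_right (by norm_num) hk
  · refine ⟨sawtooth, sawtooth_periodic, measurable_sawtooth.aestronglyMeasurable, ?_,
      fun δ => ?_, fun k _ =>
        pow_half_le_eLpNorm_top_sawtooth hη_one hη_zero (by positivity) hα⟩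
    · rw [eLpNorm_exponent_top]
      exact ((eLpNormEssSup_le_of_ae_bound (.of_forall norm_sawtooth_le)).trans_lt
        ENNReal.ofReal_lt_top).ne
    · refine iSup_le fun h => ?_
      rw [eLpNorm_exponent_top]
      exact eLpNormEssSup_le_of_ae_bound
        (.of_forall (norm_cDiffOne_iterate_le norm_sawtooth_le h.1 α))

/-- For `p ∈ {1,∞}` and `α ∈ ℕ`: for every `q > 0` and every constant
`C > 0` there are `f ∈ L_p(𝕋)` and `n ∈ ℕ` with
`(∑_{k=n+1}^∞ 2^{-qαk} ‖(η_{2^k}f)^{(α)}‖_p^q)^{1/q} > C · ω_α(f,2^{-n})_p`;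
i.e. the left-hand inequality of (9.1) cannot hold with a constant independent of `n`, `f`. -/
theorem stmt19 (p : ℝ≥0∞) (hp : p = 1 ∨ p = ∞) (α : ℕ) (hα : 0 < α)
    (η : ℝ → ℝ) (hη_smooth : ContDiffOn ℝ (⊤ : ℕ∞) η (Set.Ici 0))
    (hη_one : ∀ ξ : ℝ, ξ ≤ 1 / 2 → η ξ = 1) (hη_zero : ∀ ξ : ℝ, 1 ≤ ξ → η ξ = 0) :
    ∀ q : ℝ, 0 < q → ∀ C : ℝ, 0 < C →
      ∃ f : ℝ → ℂ, Periodic2PiOne f ∧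
        AEStronglyMeasurable f circleMeasure ∧
        eLpNorm f p circleMeasure ≠ ∞ ∧
        ∃ n : ℕ, 1 ≤ n ∧
          ENNReal.ofReal C * modSmoothOne α p f (1 / 2 ^ n) <
            (∑' k : ℕ,
              ((2 : ℝ≥0∞) ^ (-((n + 1 + k : ℕ) : ℝ) * (α : ℝ)) *
                eLpNorm (deriv^[α] (vdpMeanOne η (2 ^ (n + 1 + k)) f)) p
                  circleMeasure) ^ q) ^ (1 / q) := by
  intro q hq C hC
  have hpi := Real.pi_pos
  set c : ℝ := (1 / 4) ^ α / 2 with hc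
  have hc0 : 0 < c := by positivity
  set B : ℝ := C * (2 ^ α * (2 * Real.pi)) with hB
  have hB0 : 0 < B := by positivity
  obtain ⟨K, hK⟩ := exists_nat_gt (B ^ q / c ^ q)
  rw [div_lt_iff₀ (by positivity)] at hK
  obtain ⟨f, hper, hmeas, hfin, hmod, hlow⟩ :=
    exists_bounded_modSmoothOne_and_le_eLpNorm hp hα hη_one hη_zero K
  refine ⟨f, hper, hmeas, hfin, 1, le_rfl, ?_⟩
  have hterm : ∀ k ∈ Finset.range K, ENNReal.ofReal (c ^ q) ≤
      ((2 : ℝ≥0∞) ^ (-((1 + 1 + k : ℕ) : ℝ) * (α : ℝ)) *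
        eLpNorm (deriv^[α] (vdpMeanOne η (2 ^ (1 + 1 + k)) f)) p circleMeasure) ^ q := by
    intro k hk
    rw [← ENNReal.ofReal_rpow_of_pos hc0]
    refine ENNReal.rpow_le_rpow ?_ hq.le
    have h4 : 2 ^ (1 + 1 + k) = 4 * 2 ^ k := by rw [pow_add]; rfl
    rw [h4]
    refine le_trans (le_of_eq ?_) (mul_le_mul_right (hlow k (Finset.mem_range.mp hk)) _)
    have h2 : (2 : ℝ≥0∞) = ENNReal.ofReal 2 := by simp
    rw [h2, ENNReal.ofReal_rpow_of_pos (by norm_num), ← ENNReal.ofReal_mul (by positivity),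
      neg_mul, Real.rpow_neg (by norm_num), Real.rpow_mul (by norm_num), Real.rpow_natCast,
      Real.rpow_natCast, pow_add, hc]
    congr 1
    push_cast
    rw [mul_pow, one_div, inv_pow]
    norm_num
    field_simp
  calc ENNReal.ofReal C * modSmoothOne α p f (1 / 2 ^ 1)
      ≤ ENNReal.ofReal C * ENNReal.ofReal (2 ^ α * (2 * Real.pi)) := by
        gcongr
        exact hmod _
    _ = ENNReal.ofReal ((B ^ q) ^ (1 / q)) := by
        rw [← ENNReal.ofReal_mul hC.le, ← Real.rpow_mul hB0.le, mul_one_div_cancel hq.ne',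
          Real.rpow_one]
    _ = ENNReal.ofReal (B ^ q) ^ (1 / q) := by
        rw [ENNReal.ofReal_rpow_of_pos (by positivity)]
    _ < (∑ k ∈ Finset.range K, ENNReal.ofReal (c ^ q)) ^ (1 / q) := by
        refine ENNReal.rpow_lt_rpow ?_ (by positivity)
        rw [Finset.sum_const, Finset.card_range, nsmul_eq_mul, ← ENNReal.ofReal_natCast,
          ← ENNReal.ofReal_mul (by positivity)]
        exact (ENNReal.ofReal_lt_ofReal_iff_of_nonneg (by positivity)).mpr hK
    _ ≤ _ := by
        refine ENNReal.rpow_le_rpow ?_ (by positivity)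
        exact (Finset.sum_le_sum hterm).trans (ENNReal.sum_le_tsum _)
end
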